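/- arXiv:1406.7791 — 4 statements merged into one kernel-verified Lean document; each statement's English description precedes it below -/
import Mathlib

section
/- Let R be a commutative noetherian ring over which every flat R-module has finite projective dimension, let S be a faithfully flat R-algebra, and let N be an R-module. If Hom_R(S,N) is an injective S-module and Ext_R^n(S,N) = 0 for all n > 0, then N is an injective R-module. -/
/-!
Common definitions: `extmod R M N n` is the `n`-th Ext module `Ext_R^n(M,N)`.
-/

open CategoryTheory

universe u

/-- `Ext_R^n(M,N)`, the `n`-th Ext of the `R`-modules `M` and `N`, as an object of
`ModuleCat R`. -/
noncomputable def extmod (R : Type u) [CommRing R] (M N : Type u) [AddCommGroup M] [Module R M]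
    [AddCommGroup N] [Module R N] (n : ℕ) : ModuleCat.{u} R :=
  ((Ext R (ModuleCat.{u} R) n).obj (Opposite.op (ModuleCat.of R M))).obj (ModuleCat.of R N)

/-- The `R`-module `M` admits a projective resolution `P` with `P_m = 0` for all `m > j`;
i.e. `M` has projective dimension at most `j`. -/
def projResBddAbove (R : Type u) [CommRing R] (M : ModuleCat.{u} R) (j : ℕ) : Prop :=
  ∃ P : ProjectiveResolution M, ∀ m : ℕ, j < m → Limits.IsZero (P.complex.X m)

/-!
Adjunction gives `RHom_R(X, N) = RHom_S(X, RHom_R(S, N))` for `S`-modules `X`, so the hypotheses on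
`N` say that `Ext_R^i(X, N) = 0` for `i > 0` and every `S`-module `X`. By faithful flatness the
tensor powers `C k` of `S / R` are flat and fit into exact sequences
`0 → C k → S ⊗ C k → C (k + 1) → 0`. After tensoring with an `R`-module `M` the middle terms are
`S`-modules, so `Ext_R^1(M, N) ≃ Ext_R^(k + 1)(M ⊗ C k, N)` by dimension shifting. This
isomorphism is Yoneda multiplication by `M` tensored with the class of the spliced sequence in
`Ext_R^k(C k, R)`, a class which vanishes as soon as `k` exceeds the projective dimension of `C k`.
A bound on these dimensions that is uniform in `k` comes from the flat module `⨁ C k`.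
-/

section

open Limits Abelian TensorProduct MonoidalCategory

section ExtVanishing

universe w v u'

variable {C : Type u'} [Category.{v} C] [Abelian C]

theorem exists_hom_τ₃_eq_of_projective_X₂ {T₁ T₂ : ShortComplex C} (h₂ : T₂.ShortExact)
    [Projective T₁.X₂] (f : T₁.X₃ ⟶ T₂.X₃) : ∃ φ : T₁ ⟶ T₂, φ.τ₃ = f := by
  have := h₂.mono_f
  have := h₂.epi_g
  let b := Projective.factorThru (T₁.g ≫ f) T₂.g
  have hb : b ≫ T₂.g = T₁.g ≫ f := Projective.factorThru_comp _ _
  have ha : (T₁.f ≫ b) ≫ T₂.g = 0 := by rw [Category.assoc, hb, T₁.zero_assoc, zero_comp]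
  exact ⟨{ τ₁ := h₂.exact.lift (T₁.f ≫ b) ha, τ₂ := b, τ₃ := f, comm₁₂ := h₂.exact.lift_f _ ha,
           comm₂₃ := hb }, rfl⟩

variable [HasExt.{w} C]

theorem subsingleton_ext_of_iso {A B : C} (e : A ≅ B) {Y : C} {n : ℕ}
    (hA : Subsingleton (Ext A Y n)) : Subsingleton (Ext B Y n) :=
  (((extFunctor n).mapIso e.op).app Y).addCommGroupIsoToAddEquiv.symm.toEquiv.subsingleton_congr.1
    hA

variable {T : ShortComplex C}

theorem subsingleton_ext_X₁ (hT : T.ShortExact) {Y : C} {n : ℕ} (h₂ : Subsingleton (Ext T.X₂ Y n))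
    (h₃ : Subsingleton (Ext T.X₃ Y (n + 1))) : Subsingleton (Ext T.X₁ Y n) := by
  refine subsingleton_of_forall_eq 0 fun x ↦ ?_
  obtain ⟨y, rfl⟩ :=
    Ext.contravariant_sequence_exact₁ hT Y x (add_comm 1 n) (Subsingleton.elim _ _)
  rw [Subsingleton.elim y 0, Ext.comp_zero]

theorem subsingleton_ext_X₃ (hT : T.ShortExact) {Y : C} {n : ℕ} (h₁ : Subsingleton (Ext T.X₁ Y n))
    (h₂ : Subsingleton (Ext T.X₂ Y (n + 1))) : Subsingleton (Ext T.X₃ Y (n + 1)) := by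
  refine subsingleton_of_forall_eq 0 fun x ↦ ?_
  obtain ⟨y, rfl⟩ :=
    Ext.contravariant_sequence_exact₃ hT Y x (Subsingleton.elim _ _) (add_comm 1 n)
  rw [Subsingleton.elim y 0, Ext.comp_zero]

theorem subsingleton_ext_one_X₃ (hT : T.ShortExact) {Y : C} (h₂ : Subsingleton (Ext T.X₂ Y 1))
    (hext : ∀ φ : T.X₁ ⟶ Y, ∃ ψ : T.X₂ ⟶ Y, T.f ≫ ψ = φ) : Subsingleton (Ext T.X₃ Y 1) := by
  refine subsingleton_of_forall_eq 0 fun x ↦ ?_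
  obtain ⟨y, rfl⟩ :=
    Ext.contravariant_sequence_exact₃ hT Y x (Subsingleton.elim _ _) (add_zero 1)
  obtain ⟨φ, rfl⟩ := (Ext.mk₀_bijective _ _).2 y
  obtain ⟨ψ, rfl⟩ := hext φ
  rw [← Ext.mk₀_comp_mk₀]
  exact hT.extClass_comp_assoc _

theorem subsingleton_ext_of_injective_X₂ (hT : T.ShortExact) [Injective T.X₂] {A : C} {n : ℕ}
    (h₁ : Subsingleton (Ext A T.X₁ (n + 1 + 1))) : Subsingleton (Ext A T.X₃ (n + 1)) := by
  refine subsingleton_of_forall_eq 0 fun x ↦ ?_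
  obtain ⟨y, rfl⟩ := Ext.covariant_sequence_exact₃ A hT x rfl (Subsingleton.elim _ _)
  rw [y.eq_zero_of_injective, Ext.zero_comp]

theorem subsingleton_ext_succ_of_injective_X₂ (hT : T.ShortExact) [Injective T.X₂] {A : C}
    {n : ℕ} (h₃ : Subsingleton (Ext A T.X₃ n)) : Subsingleton (Ext A T.X₁ (n + 1)) := by
  refine subsingleton_of_forall_eq 0 fun x ↦ ?_
  obtain ⟨y, rfl⟩ := Ext.covariant_sequence_exact₁ A hT x (Ext.eq_zero_of_injective _) rfl
  rw [Subsingleton.elim y 0, Ext.zero_comp]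

theorem subsingleton_ext_one_iff_of_injective_X₂ (hT : T.ShortExact) [Injective T.X₂] (A : C) :
    Subsingleton (Ext A T.X₁ 1) ↔ ∀ φ : A ⟶ T.X₃, ∃ ψ : A ⟶ T.X₂, ψ ≫ T.g = φ := by
  constructor
  · intro _ φ
    obtain ⟨z, hz⟩ := Ext.covariant_sequence_exact₃ A hT (Ext.mk₀ φ) (zero_add 1)
      (Subsingleton.elim _ _)
    obtain ⟨ψ, rfl⟩ := (Ext.mk₀_bijective _ _).2 z
    exact ⟨ψ, (Ext.mk₀_bijective _ _).1 (by rw [← Ext.mk₀_comp_mk₀, hz])⟩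
  · intro hlift
    refine subsingleton_of_forall_eq 0 fun x ↦ ?_
    obtain ⟨y, rfl⟩ :=
      Ext.covariant_sequence_exact₁ A hT x (Ext.eq_zero_of_injective _) (zero_add 1)
    obtain ⟨φ, rfl⟩ := (Ext.mk₀_bijective _ _).2 y
    obtain ⟨ψ, rfl⟩ := hlift φ
    rw [← Ext.mk₀_comp_mk₀, Ext.comp_assoc_of_second_deg_zero, hT.comp_extClass, Ext.comp_zero]

theorem mk₀_τ₃_comp_eq_zero {T₁ T₂ : ShortComplex C} (h₁ : T₁.ShortExact)
    (h₂ : T₂.ShortExact) (φ : T₁ ⟶ T₂) {Y : C} {n : ℕ} (hX₂ : Subsingleton (Ext T₂.X₂ Y (n + 1)))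
    (hφ : ∀ y : Ext T₂.X₁ Y n, (Ext.mk₀ φ.τ₁).comp y (zero_add n) = 0)
    (x : Ext T₂.X₃ Y (n + 1)) : (Ext.mk₀ φ.τ₃).comp x (zero_add (n + 1)) = 0 := by
  obtain ⟨y, rfl⟩ :=
    Ext.contravariant_sequence_exact₃ h₂ Y x (Subsingleton.elim _ _) (add_comm 1 n)
  have hnat := ShortComplex.ShortExact.extClass_naturality h₁ h₂ φ
  rw [← Ext.comp_assoc _ _ _ (zero_add 1) _ (by omega), ← hnat,
    Ext.comp_assoc _ _ _ (add_zero 1) (zero_add n) (by omega), hφ, Ext.comp_zero]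

theorem subsingleton_ext_of_isColimit_cofan [EnoughInjectives C] {ι : Type*} {X : ι → C}
    {c : Cofan X} (hc : IsColimit c) (Y : C) (n : ℕ)
    (hX : ∀ i, Subsingleton (Ext (X i) Y (n + 1))) : Subsingleton (Ext c.pt Y (n + 1)) := by
  have hT (Y : C) : (ShortComplex.mk (Injective.ι Y) _ (cokernel.condition _)).ShortExact :=
    { exact := ShortComplex.exact_cokernel _ }
  induction n generalizing Y with
  | zero =>
    refine (subsingleton_ext_one_iff_of_injective_X₂ (hT Y) c.pt).2 fun φ ↦ ?_
    choose ψ hψ using fun i ↦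
      (subsingleton_ext_one_iff_of_injective_X₂ (hT Y) (X i)).1 (hX i) (c.inj i ≫ φ)
    exact ⟨Cofan.IsColimit.desc hc ψ, Cofan.IsColimit.hom_ext hc _ _ fun i ↦ by simp [← hψ]⟩
  | succ n ih =>
    exact subsingleton_ext_succ_of_injective_X₂ (hT Y)
      (ih _ fun i ↦ subsingleton_ext_of_injective_X₂ (hT Y) (hX i))

end ExtVanishing

section Separator

universe w v₁ v₂ u₁ u₂

theorem subsingleton_ext_map_of_isSeparator {C : Type u₁} [Category.{v₁} C] [Abelian C]
    [HasCoproducts.{v₁} C] {D : Type u₂} [Category.{v₂} D] [Abelian D] [HasExt.{w} D]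
    [EnoughInjectives D] {G : C ⥤ D} {H : D ⥤ C} (adj : G ⊣ H) [PreservesFiniteLimits G]
    {U : C} (hU : IsSeparator U) {Y : D} [Injective (H.obj Y)]
    (hUY : ∀ n, Subsingleton (Ext (G.obj U) Y (n + 1))) (X : C) (n : ℕ) :
    Subsingleton (Ext (G.obj X) Y (n + 1)) := by
  have := adj.isLeftAdjoint
  have := G.additive_of_preserves_binary_products
  have hcoprod (X : C) (n : ℕ) : Subsingleton (Ext (G.obj (∐ fun _ : U ⟶ X ↦ U)) Y (n + 1)) :=
    subsingleton_ext_of_isColimit_cofan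
      (isColimitOfHasCoproductOfPreservesColimit G fun _ : U ⟶ X ↦ U) Y n fun _ ↦ hUY n
  have hcover (X : C) : (ShortComplex.mk (kernel.ι (Sigma.desc fun f : U ⟶ X ↦ f)) _
      (kernel.condition _)).ShortExact :=
    have := (isSeparator_iff_epi U).1 hU X
    { exact := ShortComplex.exact_kernel _ }
  induction n generalizing X with
  | zero =>
    refine subsingleton_ext_one_X₃ ((hcover X).map_of_exact G) (hcoprod X 0) fun φ ↦ ?_
    let ψ := Injective.factorThru (adj.homEquiv _ _ φ) (kernel.ι (Sigma.desc fun f : U ⟶ X ↦ f))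
    refine ⟨(adj.homEquiv _ _).symm ψ, (adj.homEquiv _ _).injective ?_⟩
    refine (adj.homEquiv_naturality_left _ _).trans ?_
    rw [Equiv.apply_symm_apply]
    exact Injective.comp_factorThru _ _
  | succ n ih =>
    exact subsingleton_ext_X₃ ((hcover X).map_of_exact G) (ih _) (hcoprod X (n + 1))

end Separator

section FlatModules

variable {R : Type u} [CommRing R]

theorem flat_of_forall_lTensor_injective {C F : Type u} [AddCommGroup C] [Module R C]
    [AddCommGroup F] [Module R F] [Module.Flat R F] (i : C →ₗ[R] F)
    (hi : ∀ (A : Type u) [AddCommGroup A] [Module R A], Function.Injective (i.lTensor A)) :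
    Module.Flat R C := by
  rw [Module.Flat.iff_rTensor_preserves_injective_linearMap]
  intro A B _ _ _ _ f hf
  have hcomp : Function.Injective (f.rTensor F ∘ₗ i.lTensor A) :=
    (Module.Flat.rTensor_preserves_injective_linearMap f hf).comp (hi A)
  rw [LinearMap.rTensor_comp_lTensor, ← LinearMap.lTensor_comp_rTensor,
    LinearMap.coe_comp] at hcomp
  exact hcomp.of_comp

theorem flat_X₁_of_shortExact {T : ShortComplex (ModuleCat.{u} R)} (hT : T.ShortExact)
    [Module.Flat R T.X₂] [Module.Flat R T.X₃] : Module.Flat R T.X₁ :=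
  flat_of_forall_lTensor_injective T.f.hom fun A _ _ ↦
    LinearMap.lTensor_injective_of_exact_of_flat T.g.hom hT.moduleCat_surjective_g T.f.hom
      hT.moduleCat_injective_f
      ((ShortComplex.ShortExact.moduleCat_exact_iff_function_exact T).1 hT.exact) A

theorem shortExact_map_tensorLeft {T : ShortComplex (ModuleCat.{u} R)} (hT : T.ShortExact)
    [Module.Flat R T.X₃] (M : ModuleCat.{u} R) : (T.map (tensorLeft M)).ShortExact := by
  have hex := (ShortComplex.ShortExact.moduleCat_exact_iff_function_exact T).1 hT.exact
  have hsurj := hT.moduleCat_surjective_g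
  exact ModuleCat.shortComplex_shortExact _ (lTensor_exact M hex hsurj)
    (LinearMap.lTensor_injective_of_exact_of_flat _ hsurj _ hT.moduleCat_injective_f hex M)
    (LinearMap.lTensor_surjective M hsurj)

theorem exists_forall_hasProjectiveDimensionLT_of_flat
    (hpd : ∀ (F : Type u) [AddCommGroup F] [Module R F] [Module.Flat R F],
      ∃ n, HasProjectiveDimensionLT (ModuleCat.of R F) n)
    {ι : Type u} (X : ι → ModuleCat.{u} R) [∀ i, Module.Flat R (X i)] :
    ∃ n, ∀ i, HasProjectiveDimensionLT (X i) n := by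
  classical
  obtain ⟨n, _⟩ := hpd (DirectSum ι fun i ↦ X i)
  refine ⟨n, fun i ↦ ?_⟩
  let r : Retract (X i) (ModuleCat.of R (DirectSum ι fun i ↦ X i)) :=
    { i := ModuleCat.ofHom (DirectSum.lof R ι (X ·) i)
      r := ModuleCat.ofHom (DirectSum.component R ι (X ·) i)
      retract := ModuleCat.hom_ext <|
        LinearMap.ext fun x ↦ DirectSum.component.lof_self R (M := (X ·)) i x }
  exact r.hasProjectiveDimensionLT n

end FlatModules

section Resolutions

variable {R : Type u} [CommRing R]

theorem hasProjectiveDimensionLT_of_projResBddAbove {M : ModuleCat.{u} R} {j : ℕ}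
    (h : projResBddAbove R M j) : HasProjectiveDimensionLT M (j + 1) := by
  obtain ⟨P, hP⟩ := h
  refine HasProjectiveDimensionLT.mk fun i hi Y e ↦ ?_
  obtain ⟨f, _, rfl⟩ := P.extMk_surjective e (i + 1) rfl
  obtain rfl : f = 0 := (hP i hi).eq_of_src _ _
  exact P.extMk_zero _ _

theorem subsingleton_ext_of_subsingleton_extmod {M N : Type u} [AddCommGroup M] [Module R M]
    [AddCommGroup N] [Module R N] (n : ℕ) (h : Subsingleton (extmod R M N (n + 1))) :
    Subsingleton (Ext (ModuleCat.of R M) (ModuleCat.of R N) (n + 1)) := by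
  let P := projectiveResolution (ModuleCat.of R M)
  have hexact : (P.complex.linearYonedaObj R (ModuleCat.of R N)).ExactAt (n + 1) :=
    (HomologicalComplex.exactAt_iff_isZero_homology _ _).2
      ((ModuleCat.isZero_of_subsingleton (extmod R M N (n + 1))).of_iso (P.isoExt _ _).symm)
  rw [HomologicalComplex.exactAt_iff' _ n (n + 1) (n + 2) (by simp) (by simp),
    ShortComplex.moduleCat_exact_iff] at hexact
  refine subsingleton_of_forall_eq 0 fun x ↦ ?_
  obtain ⟨f, hf, rfl⟩ := P.extMk_surjective x (n + 2) rfl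
  exact (P.extMk_eq_zero_iff _ _ _ _ n rfl).2 (hexact f hf)

end Resolutions

section Coresolution

variable {R : Type u} [CommRing R]
variable {C D : ℕ → ModuleCat.{u} R} {i : ∀ k, C k ⟶ D k} {p : ∀ k, D k ⟶ C (k + 1)}
  {w : ∀ k, i k ≫ p k = 0} [∀ k, Module.Flat R (C k)] {M N : ModuleCat.{u} R}

-- The Yoneda product with the spliced class is computed by mapping a free resolution of `Z` to the
-- coresolution; the syzygies of `Z` are flat, so `M ⊗ -` keeps all the sequences exact.
theorem mk₀_whiskerLeft_comp_eq_zero_of_hasProjectiveDimensionLT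
    (hT : ∀ k, (ShortComplex.mk _ _ (w k)).ShortExact)
    (hD : ∀ k j, Subsingleton (Ext (M ⊗ D k) N (j + 1))) (j n : ℕ) {Z : ModuleCat.{u} R}
    [Module.Flat R Z] [HasProjectiveDimensionLT Z (n + 1)] (f : Z ⟶ C (n + 1))
    (x : Ext (M ⊗ C (n + 1)) N (j + n + 1)) :
    (Ext.mk₀ (M ◁ f)).comp x (zero_add _) = 0 := by
  induction n generalizing Z with
  | zero =>
    have : Projective Z := projective_iff_hasProjectiveDimensionLT_one.2 inferInstance
    have := (hT 0).epi_g
    have hx : (Ext.mk₀ (M ◁ p 0)).comp x (zero_add _) = 0 := (hD 0 j).elim _ _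
    rw [← Projective.factorThru_comp f (p 0), MonoidalCategory.whiskerLeft_comp,
      ← Ext.mk₀_comp_mk₀_assoc, hx, Ext.comp_zero]
  | succ n ih =>
    have hZ := Z.shortExact_projectiveShortComplex
    have : Module.Flat R Z.projectiveShortComplex.X₃ := ‹Module.Flat R Z›
    have : Module.Flat R Z.projectiveShortComplex.X₁ := flat_X₁_of_shortExact hZ
    have : HasProjectiveDimensionLT Z.projectiveShortComplex.X₁ (n + 1) :=
      (hZ.hasProjectiveDimensionLT_X₃_iff n inferInstance).1 ‹_›
    obtain ⟨φ, rfl⟩ := exists_hom_τ₃_eq_of_projective_X₂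
      (T₁ := Z.projectiveShortComplex) (hT (n + 1)) f
    exact mk₀_τ₃_comp_eq_zero (shortExact_map_tensorLeft hZ M)
      (shortExact_map_tensorLeft (hT (n + 1)) M) ((tensorLeft M).mapShortComplex.map φ)
      (hD _ _) (ih φ.τ₁) x

theorem subsingleton_ext_tensor_zero_of_coresolution
    (hT : ∀ k, (ShortComplex.mk _ _ (w k)).ShortExact)
    (hD : ∀ k j, Subsingleton (Ext (M ⊗ D k) N (j + 1))) {j k : ℕ}
    (hk : Subsingleton (Ext (M ⊗ C k) N (j + k + 1))) : Subsingleton (Ext (M ⊗ C 0) N (j + 1)) := by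
  induction k with
  | zero => exact hk
  | succ k ih =>
    exact ih (subsingleton_ext_X₁ (shortExact_map_tensorLeft (hT k) M) (hD k (j + k)) hk)

theorem subsingleton_ext_of_coresolution_of_hasProjectiveDimensionLT
    (hT : ∀ k, (ShortComplex.mk _ _ (w k)).ShortExact)
    (hD : ∀ k j, Subsingleton (Ext (M ⊗ D k) N (j + 1))) {n : ℕ}
    [HasProjectiveDimensionLT (C (n + 1)) (n + 1)] (j : ℕ) :
    Subsingleton (Ext (M ⊗ C 0) N (j + 1)) := by
  refine subsingleton_ext_tensor_zero_of_coresolution hT hD (k := n + 1) ?_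
  rw [show j + (n + 1) = j + 1 + n by omega]
  refine subsingleton_of_forall_eq 0 fun x ↦ ?_
  simpa only [MonoidalCategory.whiskerLeft_id, Ext.mk₀_id_comp] using
    mk₀_whiskerLeft_comp_eq_zero_of_hasProjectiveDimensionLT hT hD (j + 1) n (𝟙 (C (n + 1))) x

end Coresolution

section ChangeOfRings

variable {R : Type u} [CommRing R] {S : Type u} [Ring S] [Algebra R S]

variable (R S) in
/-- The `R`-module `A` viewed as the restriction of scalars of the `S`-module `A`. The two carry the
same additive group, but their `R`-actions are distinct instances related by `IsScalarTower`. -/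
noncomputable def restrictScalarsOfIso (A : Type u) [AddCommGroup A] [Module R A] [Module S A]
    [IsScalarTower R S A] :
    (ModuleCat.restrictScalars (algebraMap R S)).obj (ModuleCat.of S A) ≅ ModuleCat.of R A :=
  LinearEquiv.toModuleIso
    (m₁ := ((ModuleCat.restrictScalars (algebraMap R S)).obj (ModuleCat.of S A)).isModule)
    { AddEquiv.refl A with map_smul' := algebraMap_smul (M := A) S }

theorem subsingleton_ext_of_injective_coextendScalars {N : Type u} [AddCommGroup N] [Module R N]
    (hinj : Module.Injective S
      ((ModuleCat.coextendScalars (algebraMap R S)).obj (ModuleCat.of R N)))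
    (hS : ∀ n, Subsingleton (Ext (ModuleCat.of R S) (ModuleCat.of R N) (n + 1)))
    (A : Type u) [AddCommGroup A] [Module R A] [Module S A] [IsScalarTower R S A] (n : ℕ) :
    Subsingleton (Ext (ModuleCat.of R A) (ModuleCat.of R N) (n + 1)) := by
  have : Injective ((ModuleCat.coextendScalars (algebraMap R S)).obj (ModuleCat.of R N)) :=
    Module.injective_object_of_injective_module S
      ((ModuleCat.coextendScalars (algebraMap R S)).obj (ModuleCat.of R N))
  have : PreservesFiniteLimits (ModuleCat.restrictScalars.{u} (algebraMap R S)) :=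
    ⟨fun _ ↦ ⟨inferInstance⟩⟩
  let G := ModuleCat.restrictScalars.{u} (algebraMap R S)
  let e : ModuleCat.of R S ≅ G.obj (ModuleCat.of S (Shrink.{u} S)) :=
    (restrictScalarsOfIso R S S).symm ≪≫ G.mapIso (Shrink.linearEquiv S S).toModuleIso.symm
  exact subsingleton_ext_of_iso (restrictScalarsOfIso R S A) <|
    subsingleton_ext_map_of_isSeparator (ModuleCat.restrictCoextendScalarsAdj (algebraMap R S))
      (ModuleCat.isSeparator S) (fun n ↦ subsingleton_ext_of_iso e (hS n)) (ModuleCat.of S A) n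

end ChangeOfRings

section FaithfullyFlat

variable {R : Type u} [CommRing R] (S : Type u) [Ring S] [Algebra R S]

theorem exact_mk_one_rTensor_mkQ (C : Type u) [AddCommGroup C] [Module R C] :
    Function.Exact (TensorProduct.mk R S C 1)
      ((LinearMap.range (Algebra.linearMap R S)).mkQ.rTensor C) := by
  have hex := rTensor_exact C (LinearMap.exact_map_mkQ_range (Algebra.linearMap R S))
    (LinearMap.range (Algebra.linearMap R S)).mkQ_surjective
  have hmk : TensorProduct.mk R S C 1 =
      (Algebra.linearMap R S).rTensor C ∘ₗ (TensorProduct.lid R C).symm.toLinearMap :=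
    LinearMap.ext fun c ↦ by simp
  rw [hmk, LinearMap.coe_comp]
  exact (Function.Surjective.comp_exact_iff_exact (TensorProduct.lid R C).symm.surjective).2 hex

variable (R) in
/-- The `k`-th module of cocycles of the normalized Amitsur complex of `S` over `R`, encoded as the
`k`-fold tensor power of the `R`-module `S / R`. These modules carry the dimension shifting. -/
noncomputable def amitsurCocycle : ℕ → ModuleCat.{u} R
  | 0 => ModuleCat.of R R
  | k + 1 => ModuleCat.of R ((S ⧸ LinearMap.range (Algebra.linearMap R S)) ⊗[R] amitsurCocycle k)

variable [Module.FaithfullyFlat R S]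

theorem mk_one_injective (M : Type u) [AddCommGroup M] [Module R M] :
    Function.Injective (TensorProduct.mk R S M 1) :=
  (injective_iff_map_eq_zero _).2 fun m ↦ (Module.FaithfullyFlat.one_tmul_eq_zero_iff R M m).1

theorem lTensor_mk_one_injective (A C : Type u) [AddCommGroup A] [Module R A] [AddCommGroup C]
    [Module R C] : Function.Injective ((TensorProduct.mk R S C 1).lTensor A) := by
  have hcomp : (TensorProduct.leftComm R A S C).toLinearMap ∘ₗ (TensorProduct.mk R S C 1).lTensor A
      = TensorProduct.mk R S (A ⊗[R] C) 1 := TensorProduct.ext' fun a c ↦ by simp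
  have hinj := mk_one_injective (R := R) S (A ⊗[R] C)
  rw [← hcomp, LinearMap.coe_comp] at hinj
  exact hinj.of_comp

theorem flat_of_flat_tensorProduct (C : Type u) [AddCommGroup C] [Module R C]
    [Module.Flat R (S ⊗[R] C)] : Module.Flat R C :=
  flat_of_forall_lTensor_injective (TensorProduct.mk R S C 1) fun A _ _ ↦
    lTensor_mk_one_injective S A C

theorem flat_quotient_range_algebraLinearMap :
    Module.Flat R (S ⧸ LinearMap.range (Algebra.linearMap R S)) := by
  let ι := Algebra.linearMap R S
  have hsurj := LinearMap.lTensor_surjective S (LinearMap.range ι).mkQ_surjective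
  have hex := lTensor_exact S (LinearMap.exact_map_mkQ_range ι) (LinearMap.range ι).mkQ_surjective
  have hmul : LinearMap.mul' R S ∘ₗ ι.lTensor S = (TensorProduct.rid R S).toLinearMap :=
    TensorProduct.ext' fun s r ↦ by simp [ι, Algebra.smul_def, Algebra.commutes]
  have hretract : ((TensorProduct.rid R S).symm.toLinearMap ∘ₗ LinearMap.mul' R S) ∘ₗ
      ι.lTensor S = LinearMap.id := by
    rw [LinearMap.comp_assoc, hmul, LinearEquiv.symm_comp]
  have hsplit := hex.split_tfae'.out 1 0
  obtain ⟨-, σ, hσ⟩ : Function.Injective (ι.lTensor S) ∧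
      ∃ σ, (LinearMap.range ι).mkQ.lTensor S ∘ₗ σ = LinearMap.id :=
    hsplit.1 ⟨hsurj, _, hretract⟩
  have := Module.Flat.of_retract σ _ hσ
  exact flat_of_flat_tensorProduct S _

theorem shortExact_mk_one_rTensor_mkQ (C : Type u) [AddCommGroup C] [Module R C] :
    (ShortComplex.mk (ModuleCat.ofHom (TensorProduct.mk R S C 1))
      (ModuleCat.ofHom ((LinearMap.range (Algebra.linearMap R S)).mkQ.rTensor C))
      (ModuleCat.hom_ext (exact_mk_one_rTensor_mkQ S C).linearMap_comp_eq_zero)).ShortExact :=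
  ModuleCat.shortComplex_shortExact _ (exact_mk_one_rTensor_mkQ S C) (mk_one_injective S C)
    (LinearMap.rTensor_surjective C (Submodule.mkQ_surjective _))

instance flat_amitsurCocycle (k : ℕ) : Module.Flat R (amitsurCocycle R S k) := by
  induction k with
  | zero => exact inferInstanceAs (Module.Flat R R)
  | succ k ih =>
    have := flat_quotient_range_algebraLinearMap (R := R) S
    exact inferInstanceAs (Module.Flat R (_ ⊗[R] amitsurCocycle R S k))

end FaithfullyFlat

theorem injective_of_homS_injective_of_ext_vanishing_general
    (R : Type u) [CommRing R] (S : Type u) [Ring S] [Algebra R S] [Module.FaithfullyFlat R S]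
    (hpd : ∀ (F : Type u) [AddCommGroup F] [Module R F], Module.Flat R F →
      ∃ n : ℕ, projResBddAbove R (ModuleCat.of R F) n)
    (N : Type u) [AddCommGroup N] [Module R N]
    (hinj : Module.Injective S
      ((ModuleCat.coextendScalars (algebraMap R S)).obj (ModuleCat.of R N)))
    (hext : ∀ n : ℕ, 0 < n → Subsingleton (extmod R S N n)) :
    Module.Injective R N := by
  obtain ⟨n, hn⟩ := exists_forall_hasProjectiveDimensionLT_of_flat
    (fun F _ _ hF ↦ (hpd F hF).imp' _ fun _ ↦ hasProjectiveDimensionLT_of_projResBddAbove)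
    fun k : ULift.{u} ℕ ↦ amitsurCocycle R S k.down
  have hC : HasProjectiveDimensionLT (amitsurCocycle R S (n + 1)) (n + 1) :=
    have := hn ⟨n + 1⟩
    hasProjectiveDimensionLT_of_ge _ n _ n.le_succ
  have hS (j : ℕ) := subsingleton_ext_of_subsingleton_extmod j (hext _ j.succ_pos)
  have hD (M : ModuleCat.{u} R) (k j : ℕ) : Subsingleton
      (Ext (M ⊗ ModuleCat.of R (S ⊗[R] amitsurCocycle R S k)) (ModuleCat.of R N) (j + 1)) :=
    subsingleton_ext_of_iso (TensorProduct.leftComm R S M (amitsurCocycle R S k)).toModuleIso <|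
      subsingleton_ext_of_injective_coextendScalars hinj hS _ j
  have : Injective (ModuleCat.of R N) := injective_iff_subsingleton_ext_one.2 fun M ↦
    subsingleton_ext_of_iso (ρ_ M) <|
      subsingleton_ext_of_coresolution_of_hasProjectiveDimensionLT (n := n)
        (fun k ↦ shortExact_mk_one_rTensor_mkQ S (amitsurCocycle R S k)) (hD M) 0
  exact Module.injective_module_of_injective_object R N

end

/-- **Main Theorem.** Let `R` be a commutative noetherian ring over which every flat
`R`-module has finite projective dimension, let `S` be a faithfully flat (commutative)
`R`-algebra, and let `N` be an `R`-module.  If `Hom_R(S,N)` (with its `S`-module structure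
through the first variable, i.e. the coextension of scalars of `N`) is an injective
`S`-module and `Ext_R^n(S,N) = 0` for all `n > 0`, then `N` is an injective `R`-module. -/
theorem injective_of_homS_injective_of_ext_vanishing
    (R : Type u) [CommRing R] [IsNoetherianRing R]
    (S : Type u) [CommRing S] [Algebra R S] [Module.FaithfullyFlat R S]
    (hpd : ∀ (F : Type u) [AddCommGroup F] [Module R F], Module.Flat R F →
      ∃ n : ℕ, projResBddAbove R (ModuleCat.of R F) n)
    (N : Type u) [AddCommGroup N] [Module R N]
    (hinj : Module.Injective S
      ((ModuleCat.coextendScalars (algebraMap R S)).obj (ModuleCat.of R N)))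
    (hext : ∀ n : ℕ, 0 < n → Subsingleton (extmod R S N n)) :
    Module.Injective R N :=
  injective_of_homS_injective_of_ext_vanishing_general R S hpd N hinj hext
end

section
/- Let R be a commutative noetherian ring over which every flat R-module has finite projective dimension, and let S be a faithfully flat R-algebra. For an R-module N the following conditions are equivalent: (i) N is injective; (ii) Hom_R(S,N) is an injective R-module and Ext_R^n(S,N) = 0 for all n > 0; (iii) Hom_R(S,N) is an injective S-module and Ext_R^n(S,N) = 0 for all n > 0. -/
/-!
Common definitions: `extmod R M N n` is the `n`-th Ext module `Ext_R^n(M,N)`.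
-/

open CategoryTheory

universe u

/-!
Over a noetherian ring, `N` is injective as soon as `Extⁿ(κ(p), N) = 0` for all `n > 0` and all
primes `p`. Indeed, every element of `κ(p) ⧸ (R ⧸ p)` is killed by an ideal strictly larger than
`p`, so noetherian induction on `p` gives `Extⁿ(R ⧸ p, N) = 0`, and an extension argument as in
Baer's criterion passes from the quotients `R ⧸ p` to arbitrary modules.

If `Hom(F, N)` is injective and `Extⁿ(F, N) = 0` for `n > 0`, then, as
`Extⁿ(F ⊗ M, N) = Extⁿ(M, Hom(F, N))`, also `Extⁿ(F ⊗ M, N) = 0` for every module `M`. When `F` is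
faithfully flat, `κ(p)` is a direct summand of `F ⊗ κ(p)`, so the criterion applies to `N`.
-/

section Abelian

variable {C : Type*} [Category C] [Abelian C]

theorem exists_shortExact_injective [EnoughInjectives C] (Y : C) :
    ∃ S : ShortComplex C, S.ShortExact ∧ Injective S.X₂ ∧ S.X₁ = Y :=
  ⟨.mk (Injective.ι Y) _ (Limits.cokernel.condition _),
    { exact := ShortComplex.exact_cokernel _ },
    inferInstanceAs (Injective (Injective.under Y)), rfl⟩

variable [HasExt C]

/-- `X` is Ext-orthogonal to `Y` if `Extⁿ(X, Y) = 0` for all `n > 0`. -/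
def ExtOrthogonal (X Y : C) : Prop :=
  ∀ n : ℕ, Subsingleton (Abelian.Ext X Y (n + 1))

namespace ExtOrthogonal

theorem of_injective (X Y : C) [Injective Y] : ExtOrthogonal X Y :=
  Abelian.Ext.subsingleton_of_injective X Y

theorem of_projective (X Y : C) [Projective X] : ExtOrthogonal X Y :=
  Abelian.Ext.subsingleton_of_projective X Y

theorem of_retract {X X' Y : C} (r : Retract X X') (h : ExtOrthogonal X' Y) :
    ExtOrthogonal X Y := fun n ↦ by
  have := h n
  refine subsingleton_of_forall_eq 0 fun x ↦ ?_
  calc x = (Abelian.Ext.mk₀ r.i).comp ((Abelian.Ext.mk₀ r.r).comp x (zero_add _)) (zero_add _) := by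
        simp
    _ = 0 := by rw [Subsingleton.elim ((Abelian.Ext.mk₀ r.r).comp x _) 0, Abelian.Ext.comp_zero]

variable {S : ShortComplex C}

theorem X₁_of_shortExact (hS : S.ShortExact) {Y : C} (h₂ : ExtOrthogonal S.X₂ Y)
    (h₃ : ExtOrthogonal S.X₃ Y) : ExtOrthogonal S.X₁ Y := fun n ↦ by
  have := h₂ n
  have := h₃ (n + 1)
  refine subsingleton_of_forall_eq 0 fun x ↦ ?_
  obtain ⟨y, rfl⟩ := Abelian.Ext.contravariant_sequence_exact₁ hS Y x (add_comm _ _)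
    (Subsingleton.elim _ _)
  rw [Subsingleton.elim y 0, Abelian.Ext.comp_zero]

theorem X₂_of_shortExact (hS : S.ShortExact) {Y : C} (h₁ : ExtOrthogonal S.X₁ Y)
    (h₃ : ExtOrthogonal S.X₃ Y) : ExtOrthogonal S.X₂ Y := fun n ↦ by
  have := h₁ n
  have := h₃ n
  refine subsingleton_of_forall_eq 0 fun x ↦ ?_
  obtain ⟨y, rfl⟩ := Abelian.Ext.contravariant_sequence_exact₂ hS Y x (Subsingleton.elim _ _)
  rw [Subsingleton.elim y 0, Abelian.Ext.comp_zero]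

theorem cosyzygy (hS : S.ShortExact) [Injective S.X₂] {X : C} (h : ExtOrthogonal X S.X₁) :
    ExtOrthogonal X S.X₃ := fun n ↦ by
  have := h (n + 1)
  have := of_injective X S.X₂ n
  refine subsingleton_of_forall_eq 0 fun x ↦ ?_
  obtain ⟨y, rfl⟩ := Abelian.Ext.covariant_sequence_exact₃ X hS x rfl (Subsingleton.elim _ _)
  rw [Subsingleton.elim y 0, Abelian.Ext.zero_comp]

theorem of_cosyzygy_closed [EnoughInjectives C] {X : C} (P : C → Prop)
    (ext_one : ∀ Y, P Y → Subsingleton (Abelian.Ext X Y 1))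
    (cosyzygy : ∀ S : ShortComplex C, S.ShortExact → Injective S.X₂ → P S.X₁ → P S.X₃)
    {Y : C} (hY : P Y) : ExtOrthogonal X Y := fun n ↦ by
  induction n generalizing Y with
  | zero => exact ext_one Y hY
  | succ n ih =>
    obtain ⟨S, hS, hinj, rfl⟩ := exists_shortExact_injective Y
    have := ih (cosyzygy S hS hinj hY)
    have := of_injective X S.X₂ (n + 1)
    refine subsingleton_of_forall_eq 0 fun x ↦ ?_
    obtain ⟨y, rfl⟩ := Abelian.Ext.covariant_sequence_exact₁ X hS x (Subsingleton.elim _ _) rfl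
    rw [Subsingleton.elim y 0, Abelian.Ext.zero_comp]

end ExtOrthogonal

theorem subsingleton_ext_one_iff_exists_lift {S : ShortComplex C} (hS : S.ShortExact)
    [Injective S.X₂] (X : C) :
    Subsingleton (Abelian.Ext X S.X₁ 1) ↔ ∀ f : X ⟶ S.X₃, ∃ g : X ⟶ S.X₂, g ≫ S.g = f := by
  have := Abelian.Ext.subsingleton_of_injective X S.X₂ 0
  constructor
  · intro h f
    obtain ⟨y, hy⟩ := Abelian.Ext.covariant_sequence_exact₃ X hS (Abelian.Ext.mk₀ f)
      (zero_add 1) (Subsingleton.elim _ _)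
    obtain ⟨g, rfl⟩ := (Abelian.Ext.mk₀_bijective X S.X₂).2 y
    exact ⟨g, (Abelian.Ext.mk₀_bijective X S.X₃).1 (by simpa using hy)⟩
  · intro h
    refine subsingleton_of_forall_eq 0 fun x ↦ ?_
    obtain ⟨y, rfl⟩ := Abelian.Ext.covariant_sequence_exact₁ X hS x (Subsingleton.elim _ _)
      (zero_add 1)
    obtain ⟨f, rfl⟩ := (Abelian.Ext.mk₀_bijective X S.X₃).2 y
    obtain ⟨g, rfl⟩ := h f
    simp [← Abelian.Ext.mk₀_comp_mk₀]

theorem subsingleton_ext_one_iff_exists_extension {S : ShortComplex C} (hS : S.ShortExact)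
    [Projective S.X₂] (Y : C) :
    Subsingleton (Abelian.Ext S.X₃ Y 1) ↔ ∀ f : S.X₁ ⟶ Y, ∃ g : S.X₂ ⟶ Y, S.f ≫ g = f := by
  have := Abelian.Ext.subsingleton_of_projective S.X₂ Y 0
  constructor
  · intro h f
    obtain ⟨y, hy⟩ := Abelian.Ext.contravariant_sequence_exact₁ hS Y (Abelian.Ext.mk₀ f)
      (add_zero 1) (Subsingleton.elim _ _)
    obtain ⟨g, rfl⟩ := (Abelian.Ext.mk₀_bijective S.X₂ Y).2 y
    exact ⟨g, (Abelian.Ext.mk₀_bijective S.X₁ Y).1 (by simpa using hy)⟩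
  · intro h
    refine subsingleton_of_forall_eq 0 fun x ↦ ?_
    obtain ⟨y, rfl⟩ := Abelian.Ext.contravariant_sequence_exact₃ hS Y x (Subsingleton.elim _ _)
      (add_zero 1)
    obtain ⟨f, rfl⟩ := (Abelian.Ext.mk₀_bijective S.X₁ Y).2 y
    obtain ⟨g, rfl⟩ := h f
    simp [← Abelian.Ext.mk₀_comp_mk₀]

end Abelian

section Baer

variable {R P N : Type*} [CommRing R] [AddCommGroup P] [Module R P] [AddCommGroup N] [Module R N]

theorem exists_le_linearPMap_mem_domain (F : P →ₗ.[R] N) (y : P)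
    (h : Function.Surjective (LinearMap.lcomp R N (F.domain.colon {y}).subtype)) :
    ∃ G : P →ₗ.[R] N, F ≤ G ∧ y ∈ G.domain := by
  let f : F.domain.colon {y} →ₗ[R] N := F.toFun ∘ₗ
    ((LinearMap.toSpanSingleton R P y).restrict fun _ ↦ Submodule.mem_colon_singleton.mp)
  obtain ⟨g, hg⟩ := h f
  have smul_g_one (r : R) (hr : r • y ∈ F.domain) : r • g 1 = F ⟨r • y, hr⟩ := by
    rw [← map_smul, smul_eq_mul, mul_one]
    exact LinearMap.congr_fun hg ⟨r, Submodule.mem_colon_singleton.mpr hr⟩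
  have smul_g_one_of_smul_eq_zero (r : R) (hr : r • y = 0) : r • g 1 = 0 := by
    rw [smul_g_one r (hr ▸ F.domain.zero_mem)]
    exact (congrArg F (Subtype.ext hr)).trans F.map_zero
  let Y : P →ₗ.[R] N := LinearPMap.mkSpanSingleton' y (g 1) smul_g_one_of_smul_eq_zero
  have agree (x : F.domain) (z : Y.domain) (hxz : (x : P) = z) : F x = Y z := by
    obtain ⟨x, hx⟩ := x
    obtain ⟨z, hz⟩ := z
    obtain ⟨r, rfl⟩ := Submodule.mem_span_singleton.mp hz
    obtain rfl : x = r • y := hxz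
    exact (smul_g_one r hx).symm.trans (LinearPMap.mkSpanSingleton'_apply _ _ _ r hz).symm
  exact ⟨F.sup Y agree, LinearPMap.left_le_sup F Y agree,
    (LinearPMap.right_le_sup F Y agree).1 (Submodule.mem_span_singleton_self y)⟩

theorem lcomp_subtype_surjective_of_colon_le (K : Submodule R P)
    (h : ∀ (y : P) (J : Ideal R), K.colon {y} ≤ J →
      Function.Surjective (LinearMap.lcomp R N J.subtype)) :
    Function.Surjective (LinearMap.lcomp R N K.subtype) := fun f ↦ by
  have : Fact (Function.Injective K.subtype) := ⟨K.injective_subtype⟩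
  let F := Module.Baer.extensionOfMax K.subtype f
  have domain_eq_top : F.domain = ⊤ := Submodule.eq_top_iff'.mpr fun y ↦ by
    have hK : K ≤ F.domain := K.range_subtype.ge.trans F.le
    obtain ⟨G, hFG, hy⟩ := exists_le_linearPMap_mem_domain F.toLinearPMap y
      (h y _ (Submodule.colon_mono hK le_rfl))
    let G' : Module.Baer.ExtensionOf K.subtype f :=
      { G with
        le := F.le.trans hFG.1
        is_extension := fun x ↦ (F.is_extension x).trans (hFG.2 rfl) }
    have hG' : G' = F := Module.Baer.extensionOfMax_is_max K.subtype f G' hFG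
    exact (congrArg (fun E ↦ y ∈ E.domain) hG').mp hy
  exact ⟨F.toFun ∘ₗ (LinearEquiv.ofTop _ domain_eq_top).symm,
    LinearMap.ext fun x ↦ (F.is_extension x).symm⟩

end Baer

section Modules

variable {R : Type u} [CommRing R]

theorem subsingleton_ext_one_iff_lcomp_ker_surjective {P M : Type u} [AddCommGroup P] [Module R P]
    [Module.Projective R P] [AddCommGroup M] [Module R M] (N : ModuleCat.{u} R) {q : P →ₗ[R] M}
    (hq : Function.Surjective q) :
    Subsingleton (Abelian.Ext (ModuleCat.of R M) N 1) ↔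
      Function.Surjective (LinearMap.lcomp R N q.ker.subtype) := by
  rw [subsingleton_ext_one_iff_exists_extension (LinearMap.shortExact_shortComplexKer hq) N]
  constructor
  · intro h f
    obtain ⟨g, hg⟩ := h (ModuleCat.ofHom f)
    exact ⟨g.hom, congrArg ModuleCat.Hom.hom hg⟩
  · intro h f
    obtain ⟨g, hg⟩ := h f.hom
    exact ⟨ModuleCat.ofHom g, ModuleCat.hom_ext hg⟩

theorem subsingleton_ext_one_quotient_iff_lcomp_surjective (N : ModuleCat.{u} R) (J : Ideal R) :
    Subsingleton (Abelian.Ext (ModuleCat.of R (R ⧸ J)) N 1) ↔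
      Function.Surjective (LinearMap.lcomp R N J.subtype) := by
  rw [subsingleton_ext_one_iff_lcomp_ker_surjective N (Submodule.mkQ_surjective J),
    Submodule.ker_mkQ]

namespace ExtOrthogonal

theorem of_quotient_torsionOf_le {M N : ModuleCat.{u} R}
    (h : ∀ (y : M) (J : Ideal R), Ideal.torsionOf R M y ≤ J →
      ExtOrthogonal (ModuleCat.of R (R ⧸ J)) N) : ExtOrthogonal M N := by
  refine of_cosyzygy_closed (fun N ↦ ∀ (y : M) (J : Ideal R), Ideal.torsionOf R M y ≤ J →
    ExtOrthogonal (ModuleCat.of R (R ⧸ J)) N) (fun N h ↦ ?_)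
    (fun S hS _ h y J hJ ↦ (h y J hJ).cosyzygy hS) h
  let q := Finsupp.linearCombination R (id : M → M)
  have hq : Function.Surjective q := Finsupp.linearCombination_id_surjective R M
  refine (subsingleton_ext_one_iff_lcomp_ker_surjective N hq).mpr
    (lcomp_subtype_surjective_of_colon_le _ fun x J hJ ↦ ?_)
  have torsionOf_le : Ideal.torsionOf R M (q x) ≤ J := fun r hr ↦
    hJ (Submodule.mem_colon_singleton.mpr
      ((q.map_smul r x).trans ((Ideal.mem_torsionOf_iff _ _).mp hr)))
  exact (subsingleton_ext_one_quotient_iff_lcomp_surjective N J).mp (h (q x) J torsionOf_le 0)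

theorem of_finite_of_quotient_prime [IsNoetherianRing R] {N : ModuleCat.{u} R}
    (M : Type u) [AddCommGroup M] [Module R M] [hM : Module.Finite R M]
    (h : ∀ q : Ideal R, q.IsPrime → Module.annihilator R M ≤ q →
      ExtOrthogonal (ModuleCat.of R (R ⧸ q)) N) :
    ExtOrthogonal (ModuleCat.of R M) N := by
  induction hM using IsNoetherianRing.induction_on_isQuotientEquivQuotientPrime R with
  | subsingleton M =>
    have : Projective (ModuleCat.of R M) := (ModuleCat.isZero_of_subsingleton _).projective
    exact of_projective _ _
  | quotient M q e =>
    have annihilator_eq : Module.annihilator R M = q.1 :=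
      e.annihilator_eq.trans Ideal.annihilator_quotient
    exact (h q.1 q.2 annihilator_eq.le).of_retract (Retract.ofIso e.toModuleIso)
  | exact M₁ M₂ M₃ f g hf hg hfg h₁ h₃ =>
    let S := ModuleCat.shortComplexOfCompEqZero f g hfg.linearMap_comp_eq_zero
    have hS : S.ShortExact := ModuleCat.shortComplex_shortExact S hfg hf hg
    exact X₂_of_shortExact hS
      (h₁ fun q hq hle ↦ h q hq ((f.annihilator_le_of_injective hf).trans hle))
      (h₃ fun q hq hle ↦ h q hq ((g.annihilator_le_of_surjective hg).trans hle))

theorem of_quotient_prime [IsNoetherianRing R] {M N : ModuleCat.{u} R}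
    (h : ∀ (y : M) (q : Ideal R), q.IsPrime → Ideal.torsionOf R M y ≤ q →
      ExtOrthogonal (ModuleCat.of R (R ⧸ q)) N) : ExtOrthogonal M N :=
  of_quotient_torsionOf_le fun y J hJ ↦ of_finite_of_quotient_prime (R ⧸ J) fun q hq hJq ↦
    h y q hq (hJ.trans (Ideal.annihilator_quotient.ge.trans hJq))

end ExtOrthogonal

theorem lt_torsionOf_residueField_quotient (p : Ideal R) [p.IsPrime]
    (y : p.ResidueField ⧸ (IsScalarTower.toAlgHom R (R ⧸ p) p.ResidueField).toLinearMap.range) :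
    p < Ideal.torsionOf R _ y := by
  obtain ⟨x, rfl⟩ := Submodule.mkQ_surjective _ y
  obtain ⟨a, b, hb, rfl⟩ := IsFractionRing.div_surjective (A := R ⧸ p) x
  obtain ⟨s, rfl⟩ := Ideal.Quotient.mk_surjective b
  have algebraMap_s : algebraMap (R ⧸ p) p.ResidueField (Ideal.Quotient.mk p s) =
    algebraMap R p.ResidueField s := rfl
  have s_notMem : s ∉ p := fun hs ↦
    nonZeroDivisors.ne_zero hb (Ideal.Quotient.eq_zero_iff_mem.mpr hs)
  have algebraMap_s_ne_zero : algebraMap R p.ResidueField s ≠ 0 :=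
    Ideal.algebraMap_residueField_eq_zero.not.mpr s_notMem
  refine SetLike.lt_iff_le_and_exists.mpr ⟨fun r hr ↦ ?_, s, ?_, s_notMem⟩
  · rw [Ideal.mem_torsionOf_iff, ← map_smul, Algebra.smul_def,
      Ideal.algebraMap_residueField_eq_zero.mpr hr, zero_mul, map_zero]
  · rw [Ideal.mem_torsionOf_iff, ← map_smul, Algebra.smul_def, algebraMap_s,
      mul_div_cancel₀ _ algebraMap_s_ne_zero, Submodule.mkQ_apply, Submodule.Quotient.mk_eq_zero]
    exact ⟨a, rfl⟩

theorem extOrthogonal_quotient_prime_of_residueField [IsNoetherianRing R] {N : ModuleCat.{u} R}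
    (h : ∀ (p : Ideal R) [p.IsPrime], ExtOrthogonal (ModuleCat.of R p.ResidueField) N)
    (p : Ideal R) (hp : p.IsPrime) : ExtOrthogonal (ModuleCat.of R (R ⧸ p)) N := by
  induction p using WellFoundedGT.induction with
  | ind p ih =>
  let j := (IsScalarTower.toAlgHom R (R ⧸ p) p.ResidueField).toLinearMap
  let S := ModuleCat.shortComplexOfCompEqZero j j.range.mkQ
    (LinearMap.exact_map_mkQ_range j).linearMap_comp_eq_zero
  have hS : S.ShortExact := ModuleCat.shortComplex_shortExact S (LinearMap.exact_map_mkQ_range j)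
    p.injective_algebraMap_quotient_residueField (Submodule.mkQ_surjective _)
  exact .X₁_of_shortExact hS (h p) (.of_quotient_prime fun y q hq hle ↦
    ih q ((lt_torsionOf_residueField_quotient p y).trans_le hle) hq)

theorem injective_of_extOrthogonal_residueField [IsNoetherianRing R] {N : ModuleCat.{u} R}
    (h : ∀ (p : Ideal R) [p.IsPrime], ExtOrthogonal (ModuleCat.of R p.ResidueField) N) :
    Injective N :=
  injective_iff_subsingleton_ext_one.mpr fun _ ↦ ExtOrthogonal.of_quotient_prime
    (fun _ q hq _ ↦ extOrthogonal_quotient_prime_of_residueField h q hq) 0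

end Modules

section InternalHom

open MonoidalCategory TensorProduct

variable {R : Type u} [CommRing R]

theorem injective_ihom_obj (F E : ModuleCat.{u} R) [Module.Flat R F] [Injective E] :
    Injective ((ihom F).obj E) :=
  Injective.injective_of_adjoint (ihom.adjunction F) E

theorem shortExact_map_ihom {S : ShortComplex (ModuleCat.{u} R)} (hS : S.ShortExact)
    [Injective S.X₂] {F : ModuleCat.{u} R} (h : Subsingleton (Abelian.Ext F S.X₁ 1)) :
    (S.map (ihom F)).ShortExact := by
  have := hS.mono_f
  exact
    { exact := hS.exact.map_of_mono_of_preservesKernel _ inferInstance inferInstance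
      mono_f := inferInstanceAs (Mono ((ihom F).map S.f))
      epi_g := (ModuleCat.epi_iff_surjective _).mpr
        ((subsingleton_ext_one_iff_exists_lift hS F).mp h) }

theorem exists_section_ihom_map {S : ShortComplex (ModuleCat.{u} R)} (hS : S.ShortExact)
    [Injective S.X₂] {F : ModuleCat.{u} R} [Injective ((ihom F).obj S.X₁)]
    (h : Subsingleton (Abelian.Ext F S.X₁ 1)) : ∃ s, s ≫ (ihom F).map S.g = 𝟙 _ :=
  have : Injective (S.map (ihom F)).X₁ := inferInstanceAs (Injective ((ihom F).obj S.X₁))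
  ⟨_, (shortExact_map_ihom hS h).splittingOfInjective.s_g⟩

namespace ExtOrthogonal

theorem tensor {F N : ModuleCat.{u} R} [Module.Flat R F] (hinj : Injective ((ihom F).obj N))
    (h : ExtOrthogonal F N) (M : ModuleCat.{u} R) : ExtOrthogonal (F ⊗ M) N := by
  refine of_cosyzygy_closed (fun N ↦ Injective ((ihom F).obj N) ∧ ExtOrthogonal F N) ?_ ?_ ⟨hinj, h⟩
  · rintro N ⟨_, h⟩
    obtain ⟨S, hS, _, rfl⟩ := exists_shortExact_injective N
    obtain ⟨s, hs⟩ := exists_section_ihom_map hS (h 0)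
    refine (subsingleton_ext_one_iff_exists_lift hS _).mpr fun f ↦
      ⟨MonoidalClosed.uncurry (MonoidalClosed.curry f ≫ s), ?_⟩
    rw [← MonoidalClosed.uncurry_natural_right, Category.assoc, hs, Category.comp_id,
      MonoidalClosed.uncurry_curry]
  · rintro S hS _ ⟨_, h⟩
    obtain ⟨s, hs⟩ := exists_section_ihom_map hS (h 0)
    have := injective_ihom_obj F S.X₂
    exact ⟨Retract.injective { i := s, r := (ihom F).map S.g, retract := hs },
      h.cosyzygy hS⟩

end ExtOrthogonal

theorem nonempty_retract_tensor_divisionRing (F : ModuleCat.{u} R) [Module.FaithfullyFlat R F]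
    (K : Type u) [DivisionRing K] [Algebra R K] :
    Nonempty (Retract (ModuleCat.of R K) (F ⊗ ModuleCat.of R K)) := by
  obtain ⟨z, hz⟩ := exists_ne (0 : K ⊗[R] F)
  obtain ⟨r, hr⟩ := (LinearMap.toSpanSingleton K _ z).exists_leftInverse_of_injective
    (LinearMap.ker_toSpanSingleton K hz)
  let ρ : Retract (ModuleCat.of R K) (ModuleCat.of R K ⊗ F) :=
    { i := ModuleCat.ofHom ((LinearMap.toSpanSingleton K _ z).restrictScalars R)
      r := ModuleCat.ofHom (r.restrictScalars R)
      retract := by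
        ext x
        exact LinearMap.congr_fun hr x }
  exact ⟨ρ.trans (.ofIso (β_ _ _))⟩

theorem injective_of_injective_ihom_obj [IsNoetherianRing R] {F N : ModuleCat.{u} R}
    [Module.FaithfullyFlat R F] (hinj : Injective ((ihom F).obj N)) (h : ExtOrthogonal F N) :
    Injective N :=
  injective_of_extOrthogonal_residueField fun p _ ↦
    have ⟨ρ⟩ := nonempty_retract_tensor_divisionRing F p.ResidueField
    (h.tensor hinj _).of_retract ρ

theorem injective_ihom_obj_iff (F N : ModuleCat.{u} R) :
    Injective ((ihom F).obj N) ↔ Module.Injective R (F →ₗ[R] N) := by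
  rw [Module.injective_iff_injective_object]
  exact Injective.iso_iff (ModuleCat.homLinearEquiv (S := R)).toModuleIso

end InternalHom

section ChangeOfRings

theorem injective_restrictScalars_obj {R S : Type u} [CommRing R] [CommRing S] {f : R →+* S}
    (hf : f.Flat) (Q : ModuleCat.{u} S) [Injective Q] :
    Injective ((ModuleCat.restrictScalars f).obj Q) :=
  have := ModuleCat.preservesFiniteLimits_extendScalars_of_flat hf
  Injective.injective_of_adjoint (ModuleCat.extendRestrictScalarsAdj f) Q

variable {R S : Type u} [CommRing R] [CommRing S] [Algebra R S]

variable (R S) in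
/-- `S` with the `R`-action through `algebraMap R S` is `S` with its `R`-algebra action; the two
actions agree only propositionally. -/
noncomputable def restrictScalarsSelfIso :
    (ModuleCat.restrictScalars (algebraMap R S)).obj (ModuleCat.of S S) ≅ ModuleCat.of R S :=
  let e : (ModuleCat.restrictScalars (algebraMap R S)).obj (ModuleCat.of S S) ≃ₗ[R] S :=
    { AddEquiv.refl S with
      map_smul' := fun r (s : S) ↦ (Algebra.smul_def r s).symm }
  e.toModuleIso

variable (R S) in
/-- The underlying `R`-module of the coextension of scalars of `N` is the internal hom of `S` and
`N`, as both functors are right adjoint to `S ⊗[R] -`. -/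
noncomputable def coextendRestrictScalarsIsoIhom :
    ModuleCat.coextendScalars.{u, u, u} (algebraMap R S) ⋙
      ModuleCat.restrictScalars (algebraMap R S) ≅ ihom (ModuleCat.of R S) :=
  Adjunction.rightAdjointUniq
    (((ModuleCat.extendRestrictScalarsAdj (algebraMap R S)).comp
      (ModuleCat.restrictCoextendScalarsAdj (algebraMap R S))).ofNatIsoLeft
        ((MonoidalCategory.tensoringLeft _).mapIso (restrictScalarsSelfIso R S)))
    (ihom.adjunction (ModuleCat.of R S))

theorem injective_ihom_obj_of_coextendScalars [Module.Flat R S] (N : ModuleCat.{u} R)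
    [Injective ((ModuleCat.coextendScalars (algebraMap R S)).obj N)] :
    Injective ((ihom (ModuleCat.of R S)).obj N) :=
  Injective.of_iso ((coextendRestrictScalarsIsoIhom R S).app N)
    (injective_restrictScalars_obj (RingHom.flat_algebraMap_iff.mpr ‹Module.Flat R S›) _)

end ChangeOfRings

section Extmod

variable {R : Type u} [CommRing R]

theorem subsingleton_extmod_succ_iff (M N : Type u) [AddCommGroup M] [Module R M]
    [AddCommGroup N] [Module R N] (n : ℕ) :
    Subsingleton (extmod R M N (n + 1)) ↔
      Subsingleton (Abelian.Ext (ModuleCat.of R M) (ModuleCat.of R N) (n + 1)) := by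
  let P := projectiveResolution (ModuleCat.of R M)
  have extmod_iff : Subsingleton (extmod R M N (n + 1)) ↔
      ∀ f : P.complex.X (n + 1) ⟶ ModuleCat.of R N, P.complex.d (n + 2) (n + 1) ≫ f = 0 →
        ∃ g : P.complex.X n ⟶ ModuleCat.of R N, P.complex.d (n + 1) n ≫ g = f := by
    rw [← ModuleCat.isZero_iff_subsingleton, extmod,
      (P.isoExt (R := R) (n + 1) (ModuleCat.of R N)).isZero_iff,
      ← HomologicalComplex.exactAt_iff_isZero_homology,
      HomologicalComplex.exactAt_iff' _ n (n + 1) (n + 2) (by simp) (by simp),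
      ShortComplex.moduleCat_exact_iff]
    rfl
  rw [extmod_iff]
  constructor
  · intro h
    refine subsingleton_of_forall_eq 0 fun x ↦ ?_
    obtain ⟨f, hf, rfl⟩ := P.extMk_surjective x (n + 2) rfl
    exact (P.extMk_eq_zero_iff f (n + 2) rfl hf n rfl).mpr (h f hf)
  · intro h f hf
    exact (P.extMk_eq_zero_iff f (n + 2) rfl hf n rfl).mp (Subsingleton.elim _ _)

theorem forall_subsingleton_extmod_iff_extOrthogonal (M N : Type u) [AddCommGroup M] [Module R M]
    [AddCommGroup N] [Module R N] :
    (∀ n : ℕ, 0 < n → Subsingleton (extmod R M N n)) ↔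
      ExtOrthogonal (ModuleCat.of R M) (ModuleCat.of R N) := by
  refine ⟨fun h n ↦ (subsingleton_extmod_succ_iff M N n).mp (h _ n.succ_pos), ?_⟩
  rintro h (_ | n) hn
  · exact absurd hn (lt_irrefl 0)
  · exact (subsingleton_extmod_succ_iff M N n).mpr (h n)

end Extmod

theorem injective_tfae_homS_injective_general
    (R : Type u) [CommRing R] [IsNoetherianRing R]
    (S : Type u) [CommRing S] [Algebra R S] [Module.FaithfullyFlat R S]
    (N : Type u) [AddCommGroup N] [Module R N] :
    (Module.Injective R N ↔
      (Module.Injective R (S →ₗ[R] N) ∧ ∀ n : ℕ, 0 < n → Subsingleton (extmod R S N n))) ∧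
    (Module.Injective R N ↔
      (Module.Injective S
          ((ModuleCat.coextendScalars (algebraMap R S)).obj (ModuleCat.of R N)) ∧
        ∀ n : ℕ, 0 < n → Subsingleton (extmod R S N n))) := by
  rw [forall_subsingleton_extmod_iff_extOrthogonal,
    ← injective_ihom_obj_iff (ModuleCat.of R S) (ModuleCat.of R N),
    Module.injective_iff_injective_object R N, Module.injective_iff_injective_object S]
  have coextension_injective [Injective (ModuleCat.of R N)] : Injective
      ((ModuleCat.coextendScalars (algebraMap R S)).obj (ModuleCat.of R N)) :=
    Injective.injective_of_adjoint (ModuleCat.restrictCoextendScalarsAdj (algebraMap R S))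
      (ModuleCat.of R N)
  exact ⟨⟨fun _ ↦ ⟨injective_ihom_obj _ _, .of_injective _ _⟩,
      fun ⟨hom_injective, h⟩ ↦ injective_of_injective_ihom_obj hom_injective h⟩,
    ⟨fun _ ↦ ⟨coextension_injective, .of_injective _ _⟩,
      fun ⟨_, h⟩ ↦ injective_of_injective_ihom_obj (injective_ihom_obj_of_coextendScalars _) h⟩⟩

/-- Let `R` be a commutative noetherian ring over which every flat `R`-module has finite
projective dimension, let `S` be a faithfully flat (commutative) `R`-algebra, and let `N`
be an `R`-module.  The following conditions are equivalent:
(i) `N` is an injective `R`-module;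
(ii) `Hom_R(S,N)` is an injective `R`-module and `Ext_R^n(S,N) = 0` for all `n > 0`;
(iii) `Hom_R(S,N)` (with its `S`-module structure through the first variable, i.e. the
coextension of scalars of `N`) is an injective `S`-module and `Ext_R^n(S,N) = 0` for all
`n > 0`. -/
theorem injective_tfae_homS_injective
    (R : Type u) [CommRing R] [IsNoetherianRing R]
    (S : Type u) [CommRing S] [Algebra R S] [Module.FaithfullyFlat R S]
    (hpd : ∀ (F : Type u) [AddCommGroup F] [Module R F], Module.Flat R F →
      ∃ n : ℕ, projResBddAbove R (ModuleCat.of R F) n)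
    (N : Type u) [AddCommGroup N] [Module R N] :
    (Module.Injective R N ↔
      (Module.Injective R (S →ₗ[R] N) ∧ ∀ n : ℕ, 0 < n → Subsingleton (extmod R S N n))) ∧
    (Module.Injective R N ↔
      (Module.Injective S
          ((ModuleCat.coextendScalars (algebraMap R S)).obj (ModuleCat.of R N)) ∧
        ∀ n : ℕ, 0 < n → Subsingleton (extmod R S N n))) :=
  injective_tfae_homS_injective_general R S N
end

section
/- Let R be a commutative noetherian ring, S a flat R-algebra, and N an R-module with Ext_R^n(S,N) = 0 for all n > 0. Then for every R-module E and every n ≥ 0 there is an isomorphism Ext_R^n(S ⊗_R E, N) ≅ Ext_R^n(E, Hom_R(S,N)). -/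
/-!
Common definitions: `extmod R M N n` is the `n`-th Ext module `Ext_R^n(M,N)`.
-/

open CategoryTheory

universe u

/-!
Let `I` be an injective resolution of `N`. The left adjoint `S ⊗ -` of `Hom(S, -)` is exact, so
`Hom(S, -)` preserves injectives. The cohomology of `Hom(S, I)` is `Ext(S, N)`, which vanishes in
positive degrees, so `Hom(S, I)` is an injective resolution of `Hom(S, N)`. The adjunction
identifies the complexes `Hom(S ⊗ E, I)` and `Hom(E, Hom(S, I))`; taking cohomology gives the
claim. Since `Ext R C n` is defined by projective resolutions, it is compared with `Abelian.Ext`,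
which both kinds of resolutions compute.
-/

open Limits

universe v w w'

section HomologyOfModules

variable {R : Type*} [Ring R] {A : Type*} [AddCommGroup A] [Module R A]

/-- The first isomorphism theorem for the homology of a short complex of modules: a surjection
from the cycles whose kernel consists of the boundaries induces an isomorphism from the
homology. -/
noncomputable def moduleCatHomologyLinearEquivOfSurjective (T : ShortComplex (ModuleCat R))
    (b : LinearMap.ker T.g.hom →ₗ[R] A) (hsurj : Function.Surjective b)
    (hker : ∀ z, b z = 0 ↔ z.1 ∈ LinearMap.range T.f.hom) : T.homology ≃ₗ[R] A :=
  T.moduleCatHomologyIso.toLinearEquiv ≪≫ₗ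
    Submodule.quotEquivOfEq (LinearMap.range T.moduleCatToCycles) (LinearMap.ker b) (by
      ext z
      rw [LinearMap.mem_ker, hker]
      exact ⟨fun ⟨x, hx⟩ ↦ ⟨x, congrArg Subtype.val hx⟩,
        fun ⟨x, hx⟩ ↦ ⟨x, Subtype.ext hx⟩⟩) ≪≫ₗ
    b.quotKerEquivOfSurjective hsurj

end HomologyOfModules

section ExtOfResolution

variable {C : Type*} [Category.{v} C] [Abelian C] [HasExt.{w} C] {X Y : C}

section Projective

variable (P : ProjectiveResolution X)

lemma projectiveResolution_extMk_zero_eq_zero_iff (f : P.complex.X 0 ⟶ Y) (m : ℕ)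
    (hm : 0 + 1 = m) (hf : P.complex.d m 0 ≫ f = 0) :
    P.extMk f m hm hf = 0 ↔ f = 0 := by
  refine ⟨fun h ↦ ?_, by rintro rfl; exact P.extMk_zero m hm⟩
  rw [← P.extEquivCohomologyClass.apply_eq_iff_eq, P.extEquivCohomologyClass_extMk,
    P.extEquivCohomologyClass_zero, CochainComplex.HomComplex.CohomologyClass.mk_eq_zero_iff,
    CochainComplex.HomComplex.Cocycle.toSingleMk_mem_coboundaries_iff _ _ _ _ _ 1 (by simp)] at h
  obtain ⟨g, hg⟩ := h
  rw [(P.cochainComplex.isZero_of_isStrictlyLE 0 1).eq_of_src g 0, comp_zero] at hg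
  simpa using hg.symm

/-- For `n = 0` the index `next n` is again `0`, and the differential `d 0 0` vanishes. -/
lemma projectiveResolution_extMk_eq_zero_iff_exists {n : ℕ} (f : P.complex.X n ⟶ Y) (m : ℕ)
    (hm : n + 1 = m) (hf : P.complex.d m n ≫ f = 0) :
    P.extMk f m hm hf = 0 ↔
      ∃ g : P.complex.X ((ComplexShape.down ℕ).next n) ⟶ Y, P.complex.d n _ ≫ g = f := by
  cases n with
  | zero =>
    rw [projectiveResolution_extMk_zero_eq_zero_iff, P.complex.shape 0 _ (by simp)]
    simp [eq_comm]
  | succ n => exact P.extMk_eq_zero_iff f m hm hf _ (by simp)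

end Projective

section Injective

variable (I : InjectiveResolution Y)

lemma injectiveResolution_extMk_zero_eq_zero_iff (f : X ⟶ I.cocomplex.X 0) (m : ℕ)
    (hm : 0 + 1 = m) (hf : f ≫ I.cocomplex.d 0 m = 0) :
    I.extMk f m hm hf = 0 ↔ f = 0 := by
  refine ⟨fun h ↦ ?_, by rintro rfl; exact I.extMk_zero m hm⟩
  rw [← I.extEquivCohomologyClass.apply_eq_iff_eq, I.extEquivCohomologyClass_extMk,
    I.extEquivCohomologyClass_zero, CochainComplex.HomComplex.CohomologyClass.mk_eq_zero_iff,
    CochainComplex.HomComplex.Cocycle.fromSingleMk_mem_coboundaries_iff _ _ _ _ _ (-1)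
      (by simp)] at h
  obtain ⟨g, hg⟩ := h
  rw [(I.cochainComplex.isZero_of_isStrictlyGE 0 (-1)).eq_of_tgt g 0, zero_comp] at hg
  simpa using hg.symm

lemma injectiveResolution_extMk_eq_zero_iff_exists {n : ℕ} (f : X ⟶ I.cocomplex.X n) (m : ℕ)
    (hm : n + 1 = m) (hf : f ≫ I.cocomplex.d n m = 0) :
    I.extMk f m hm hf = 0 ↔
      ∃ g : X ⟶ I.cocomplex.X ((ComplexShape.up ℕ).prev n), g ≫ I.cocomplex.d _ n = f := by
  cases n with
  | zero =>
    rw [injectiveResolution_extMk_zero_eq_zero_iff, I.cocomplex.shape _ 0 (by simp)]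
    simp [eq_comm]
  | succ n => exact I.extMk_eq_zero_iff f m hm hf _ (by simp)

end Injective

variable {R : Type*} [Ring R] [Linear R C]

lemma projectiveResolution_smul_extMk (P : ProjectiveResolution X) (r : R) {n : ℕ}
    (f : P.complex.X n ⟶ Y) (m : ℕ) (hm : n + 1 = m) (hf : P.complex.d m n ≫ f = 0) :
    r • P.extMk f m hm hf = P.extMk (r • f) m hm (by simp [hf]) := by
  simp [Abelian.Ext.smul_eq_comp_mk₀, P.extMk_comp_mk₀]

lemma injectiveResolution_smul_extMk (I : InjectiveResolution Y) (r : R) {n : ℕ}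
    (f : X ⟶ I.cocomplex.X n) (m : ℕ) (hm : n + 1 = m) (hf : f ≫ I.cocomplex.d n m = 0) :
    r • I.extMk f m hm hf = I.extMk (r • f) m hm (by simp [hf]) := by
  calc r • I.extMk f m hm hf
      = (Abelian.Ext.mk₀ (r • 𝟙 X)).comp (I.extMk f m hm hf) (zero_add n) := by
        rw [Abelian.Ext.mk₀_smul, Abelian.Ext.smul_comp, Abelian.Ext.mk₀_id_comp]
    _ = I.extMk (r • f) m hm (by simp [hf]) := by simp [I.mk₀_comp_extMk]

/-- `Ext^n(X, Y)` as the cohomology of `Hom(P, Y)`, for a projective resolution `P` of `X`. -/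
noncomputable def linearYonedaHomologyLinearEquivExt (P : ProjectiveResolution X) (n : ℕ) :
    (P.complex.linearYonedaObj R Y).homology n ≃ₗ[R] Abelian.Ext.{w} X Y n :=
  moduleCatHomologyLinearEquivOfSurjective ((P.complex.linearYonedaObj R Y).sc n)
    { toFun f := P.extMk f.1 _ (by simp) f.2
      map_add' f g := (P.add_extMk _ _ _ (by simp) f.2 g.2).symm
      map_smul' r f := (projectiveResolution_smul_extMk P r _ _ (by simp) f.2).symm }
    (fun α ↦ by
      obtain ⟨f, hf, rfl⟩ := P.extMk_surjective α ((ComplexShape.up ℕ).next n) (by simp)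
      exact ⟨⟨f, hf⟩, rfl⟩)
    (fun f ↦ projectiveResolution_extMk_eq_zero_iff_exists P _ _ (by simp) f.2)

/-- The cochain complex `Hom(X, K)` of `R`-modules; the covariant counterpart of
`ChainComplex.linearYonedaObj`. -/
abbrev linearCoyonedaComplex (R : Type*) [Ring R] [Linear R C] (X : C) (K : CochainComplex C ℕ) :
    CochainComplex (ModuleCat R) ℕ :=
  (((linearCoyoneda R C).obj (.op X)).mapHomologicalComplex _).obj K

/-- `Ext^n(X, Y)` as the cohomology of `Hom(X, I)`, for an injective resolution `I` of `Y`. -/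
noncomputable def linearCoyonedaHomologyLinearEquivExt (I : InjectiveResolution Y) (n : ℕ) :
    (linearCoyonedaComplex R X I.cocomplex).homology n ≃ₗ[R] Abelian.Ext.{w} X Y n :=
  moduleCatHomologyLinearEquivOfSurjective ((linearCoyonedaComplex R X I.cocomplex).sc n)
    { toFun f := I.extMk f.1 _ (by simp) f.2
      map_add' f g := (I.add_extMk _ _ _ (by simp) f.2 g.2).symm
      map_smul' r f := (injectiveResolution_smul_extMk I r _ _ (by simp) f.2).symm }
    (fun α ↦ by
      obtain ⟨f, hf, rfl⟩ := I.extMk_surjective α ((ComplexShape.up ℕ).next n) (by simp)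
      exact ⟨⟨f, hf⟩, rfl⟩)
    (fun f ↦ injectiveResolution_extMk_eq_zero_iff_exists I _ _ (by simp) f.2)

lemma linearCoyonedaComplex_exactAt_of_subsingleton_ext (I : InjectiveResolution Y) (n : ℕ)
    [Subsingleton (Abelian.Ext.{w} X Y n)] :
    (linearCoyonedaComplex R X I.cocomplex).ExactAt n := by
  rw [HomologicalComplex.exactAt_iff_isZero_homology]
  have := (linearCoyonedaHomologyLinearEquivExt (R := R) (X := X) I n).injective.subsingleton
  exact ModuleCat.isZero_of_subsingleton _

/-- The derived functor `Ext R C n`, computed by a projective resolution of the first argument,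
agrees with `Abelian.Ext`. -/
noncomputable def extLinearEquivAbelianExt [EnoughProjectives C] (X Y : C) (n : ℕ) :
    ((Ext R C n).obj (.op X)).obj Y ≃ₗ[R] Abelian.Ext.{w} X Y n :=
  ((projectiveResolution X).isoExt n Y).toLinearEquiv ≪≫ₗ
    linearYonedaHomologyLinearEquivExt (projectiveResolution X) n

end ExtOfResolution

section MapInjectiveResolution

variable {C D : Type*} [Category* C] [Abelian C] [Category* D] [Abelian D]

/-- The injective resolution given by an exact sequence `0 ⟶ Y ⟶ K⁰ ⟶ K¹ ⟶ ⋯` with all `Kⁿ`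
injective. -/
noncomputable def injectiveResolutionOfExact {Y : C} (K : CochainComplex C ℕ)
    (hK : ∀ n, Injective (K.X n)) (i : Y ⟶ K.X 0) (hmono : Mono i) (hi : i ≫ K.d 0 1 = 0)
    (hexact : (ShortComplex.mk i (K.d 0 1) hi).Exact) (hexactAt : ∀ n, K.ExactAt (n + 1)) :
    InjectiveResolution Y where
  cocomplex := K
  injective := hK
  ι := (CochainComplex.fromSingle₀Equiv K Y).symm ⟨i, hi⟩
  quasiIso := ⟨fun n ↦ by
    cases n with
    | zero =>
      rw [CochainComplex.quasiIsoAt₀_iff, ShortComplex.quasiIso_iff_of_zeros _ rfl rfl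
        (K.shape 0 0 (by simp))]
      refine (ShortComplex.exact_and_mono_f_iff_of_iso (S₂ := .mk i (K.d 0 1) hi) ?_).2
        ⟨hexact, hmono⟩
      exact ShortComplex.isoMk (Iso.refl _) (Iso.refl _) (Iso.refl _)
        ((Category.id_comp i).trans ((Category.comp_id _).trans
          (CochainComplex.fromSingle₀Equiv_symm_apply_f_zero i hi)).symm)
        ((Category.id_comp (K.d 0 1)).trans (Category.comp_id (K.d 0 1)).symm)
    | succ n =>
      rw [quasiIsoAt_iff_exactAt _ _ (CochainComplex.exactAt_succ_single_obj _ _)]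
      exact hexactAt n⟩

/-- The image `G(I)` of an injective resolution `I` of `Y` as an injective resolution of `G(Y)`,
for a left exact functor `G` that preserves injectives. The condition `hG` says that the right
derived functors of `G` vanish on `Y` in positive degrees. -/
noncomputable def injectiveResolutionMap {Y : D} (I : InjectiveResolution Y) (G : D ⥤ C)
    [G.Additive] [PreservesFiniteLimits G] [G.PreservesInjectiveObjects]
    (hG : ∀ n, ((G.mapHomologicalComplex _).obj I.cocomplex).ExactAt (n + 1)) :
    InjectiveResolution (G.obj Y) :=
  let i : Y ⟶ I.cocomplex.X 0 := I.ι.f 0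
  have hi : Mono i := inferInstanceAs (Mono (I.ι.f 0))
  let T := ShortComplex.mk i (I.cocomplex.d 0 1) I.ι_f_zero_comp_complex_d
  have hT : T.Exact := T.exact_of_f_is_kernel I.isLimitKernelFork
  injectiveResolutionOfExact ((G.mapHomologicalComplex _).obj I.cocomplex)
    (fun n ↦ G.injective_obj (I.cocomplex.X n)) (G.map i) (G.map_mono i) (T.map G).zero
    (hT.map_of_mono_of_preservesKernel G hi inferInstance) hG

end MapInjectiveResolution

section Adjunction

variable {C D : Type*} [Category.{v} C] [Abelian C] [Category.{v} D] [Abelian D]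
  {R : Type*} [Ring R] [Linear R C] [Linear R D] {L : C ⥤ D} {G : D ⥤ C}
  [G.Additive] [G.Linear R]

/-- The isomorphism `Hom(L(X), -) ≅ Hom(X, G(-))` of functors to `R`-modules given by an
adjunction `L ⊣ G`. -/
def linearCoyonedaObjIsoOfAdjunction (adj : L ⊣ G) (X : C) :
    (linearCoyoneda R D).obj (.op (L.obj X)) ≅ G ⋙ (linearCoyoneda R C).obj (.op X) :=
  NatIso.ofComponents
    (fun Y ↦ LinearEquiv.toModuleIso
      { adj.homEquiv X Y with
        map_add' f g := by simp [Adjunction.homEquiv_unit]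
        map_smul' r f := by simp [Adjunction.homEquiv_unit, Functor.map_smul] })
    (fun f ↦ by ext g; exact adj.homEquiv_naturality_right g f)

/-- `Ext^n(L(X), Y) ≃ Ext^n(X, G(Y))` for an adjunction `L ⊣ G` with `L` exact, provided the
right derived functors of `G` vanish on `Y` in positive degrees. -/
noncomputable def extLinearEquivOfAdjunction [HasExt.{w} C] [HasExt.{w'} D]
    [L.PreservesMonomorphisms] (adj : L ⊣ G) {Y : D} (I : InjectiveResolution Y)
    (hG : ∀ n, ((G.mapHomologicalComplex _).obj I.cocomplex).ExactAt (n + 1)) (X : C) (n : ℕ) :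
    Abelian.Ext.{w'} (L.obj X) Y n ≃ₗ[R] Abelian.Ext.{w} X (G.obj Y) n :=
  have := adj.isRightAdjoint
  have := Functor.preservesInjectiveObjects_of_adjunction_of_preservesMonomorphisms adj
  let homIso : linearCoyonedaComplex R (L.obj X) I.cocomplex ≅
      linearCoyonedaComplex R X (injectiveResolutionMap I G hG).cocomplex :=
    (NatIso.mapHomologicalComplex
      (linearCoyonedaObjIsoOfAdjunction (R := R) adj X) _).app I.cocomplex
  (linearCoyonedaHomologyLinearEquivExt I n).symm ≪≫ₗ
    ((HomologicalComplex.homologyFunctor _ _ n).mapIso homIso).toLinearEquiv ≪≫ₗ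
    linearCoyonedaHomologyLinearEquivExt (injectiveResolutionMap I G hG) n

end Adjunction

theorem ext_tensor_iso_ext_hom_general
    (R : Type u) [CommRing R]
    (S : Type u) [AddCommGroup S] [Module R S] [Module.Flat R S]
    (N : Type u) [AddCommGroup N] [Module R N]
    (hext : ∀ n : ℕ, 0 < n → Subsingleton (extmod R S N n))
    (E : Type u) [AddCommGroup E] [Module R E] (n : ℕ) :
    Nonempty (extmod R (TensorProduct R S E) N n ≅ extmod R E (S →ₗ[R] N) n) := by
  let I := injectiveResolution (ModuleCat.of R N)
  let G := (linearCoyoneda R (ModuleCat.{u} R)).obj (.op (ModuleCat.of R S))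
  let adj : MonoidalCategory.tensorLeft (ModuleCat.of R S) ⊣ G :=
    ihom.adjunction (ModuleCat.of R S)
  have : G.Linear R := { }
  have hG (m : ℕ) : ((G.mapHomologicalComplex _).obj I.cocomplex).ExactAt (m + 1) := by
    have : Subsingleton (((Ext R (ModuleCat.{u} R) (m + 1)).obj (.op (.of R S))).obj (.of R N)) :=
      hext (m + 1) m.succ_pos
    have := (extLinearEquivAbelianExt (R := R)
      (ModuleCat.of R S) (ModuleCat.of R N) (m + 1)).symm.injective.subsingleton
    exact linearCoyonedaComplex_exactAt_of_subsingleton_ext I (m + 1)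
  let homIso : G.obj (ModuleCat.of R N) ≅ ModuleCat.of R (S →ₗ[R] N) :=
    ModuleCat.homLinearEquiv.toModuleIso
  exact ⟨(extLinearEquivAbelianExt _ _ n ≪≫ₗ
    extLinearEquivOfAdjunction adj I hG (ModuleCat.of R E) n ≪≫ₗ
    (extLinearEquivAbelianExt _ _ n).symm).toModuleIso ≪≫
    ((Ext R _ n).obj _).mapIso homIso⟩

/-- Let `R` be a commutative noetherian ring, `S` a flat (commutative) `R`-algebra, and
`N` an `R`-module with `Ext_R^n(S,N) = 0` for all `n > 0`.  Then for every `R`-module `E`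
and every `n ≥ 0` there is an isomorphism
`Ext_R^n(S ⊗_R E, N) ≅ Ext_R^n(E, Hom_R(S,N))`. -/
theorem ext_tensor_iso_ext_hom
    (R : Type u) [CommRing R] [IsNoetherianRing R]
    (S : Type u) [CommRing S] [Algebra R S] [Module.Flat R S]
    (N : Type u) [AddCommGroup N] [Module R N]
    (hext : ∀ n : ℕ, 0 < n → Subsingleton (extmod R S N n))
    (E : Type u) [AddCommGroup E] [Module R E] (n : ℕ) :
    Nonempty (extmod R (TensorProduct R S E) N n ≅ extmod R E (S →ₗ[R] N) n) :=
  ext_tensor_iso_ext_hom_general R S N hext E n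
end

section
/- Let R be a commutative noetherian ring and S a faithfully flat R-algebra. If X is an R-complex such that the complex RHom_R(S,X) is acyclic, then X is acyclic. In particular, an R-module N with Hom_R(S,N) = 0 and Ext_R^n(S,N) = 0 for all n > 0 is the zero module. -/
/-!
Common definitions: `extmod R M N n` is the `n`-th Ext module `Ext_R^n(M,N)`.
-/

open CategoryTheory

universe u

/-- A homological complex is acyclic if it is exact in every degree, i.e. all its
homology vanishes. -/
def isAcyclic {R : Type u} [CommRing R] {ι : Type*} {c : ComplexShape ι}
    (K : HomologicalComplex (ModuleCat.{u} R) c) : Prop :=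
  ∀ i, K.ExactAt i

/-- A `ℤ`-indexed chain complex `I` of `R`-modules is *semi-injective* if every component
`I_n` is an injective `R`-module and the functor `Hom_R(-, I)` preserves acyclicity;
equivalently (as formalized here), every chain map from an acyclic complex to `I` is
null-homotopic. -/
def SemiInjective (R : Type u) [CommRing R] (I : ChainComplex (ModuleCat.{u} R) ℤ) : Prop :=
  (∀ n : ℤ, Injective (I.X n)) ∧
    ∀ M : ChainComplex (ModuleCat.{u} R) ℤ, isAcyclic M → ∀ f : M ⟶ I, Nonempty (Homotopy f 0)

/-- The complex `Hom_R(M, I)` obtained by applying the functor `Hom_R(M, -)` degreewise to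
a `ℤ`-indexed chain complex `I` of `R`-modules. -/
noncomputable def homComplex {R : Type u} [CommRing R] (M : ModuleCat.{u} R)
    (I : ChainComplex (ModuleCat.{u} R) ℤ) : ChainComplex (ModuleCat.{u} R) ℤ :=
  (((linearCoyoneda R (ModuleCat.{u} R)).obj (Opposite.op M)).mapHomologicalComplex _).obj I

/-!
Every `S`-module `A` inherits acyclicity of `Hom_R(A, I)` from `Hom_R(S, I)`: evaluation at `1` is
a chain map `Hom_R(S, I) ⟶ I` with acyclic source, hence null-homotopic, and every cycle in
`Hom_R(A, I)` factors through it. Each residue field `κ(p)` of `R` is an `R`-linear direct summand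
of a residue field of `S`, so `Hom_R(κ(p), I)` is acyclic. The cokernel of `R ⧸ p ↪ κ(p)` is
supported at primes strictly containing `p`; Noetherian induction together with Baer's argument
therefore makes `Hom_R(R ⧸ p, I)` acyclic for all `p`, and then `Hom_R(M, I)` for all `M`. The case
`M = R` says that `I` is acyclic.
-/

open Limits

section HomAcyclic

variable {C ι : Type*} [Category* C] [HasZeroMorphisms C] {c : ComplexShape ι}

/-- The complex `Hom(A, K)` is acyclic: every `g : A ⟶ K.X i` that is a cycle is a boundary. -/
def HomAcyclic (A : C) (K : HomologicalComplex C c) : Prop :=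
  ∀ (i : ι) (g : A ⟶ K.X i), g ≫ K.d i (c.next i) = 0 →
    ∃ h : A ⟶ K.X (c.prev i), h ≫ K.d (c.prev i) i = g

lemma HomAcyclic.exists_lift {A : C} {K : HomologicalComplex C c} (hA : HomAcyclic A K) {i j : ι}
    (hij : c.Rel i j) (g : A ⟶ K.X j) (hg : g ≫ K.d j (c.next j) = 0) :
    ∃ h : A ⟶ K.X i, h ≫ K.d i j = g := by
  obtain rfl := c.prev_eq' hij
  exact hA j g hg

lemma HomAcyclic.of_retract {A B : C} {K : HomologicalComplex C c} (hB : HomAcyclic B K)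
    (e : Retract A B) : HomAcyclic A K := by
  intro i g hg
  obtain ⟨h, hh⟩ := hB i (e.r ≫ g) (by rw [Category.assoc, hg, comp_zero])
  exact ⟨e.i ≫ h, by rw [Category.assoc, hh, e.retract_assoc]⟩

end HomAcyclic

lemma HomAcyclic.of_mono_of_cokernel {C ι : Type*} [Category* C] [Abelian C]
    {c : ComplexShape ι} {K : HomologicalComplex C c} (hK : ∀ i, Injective (K.X i))
    {A B : C} (f : A ⟶ B) [Mono f] (hB : HomAcyclic B K) (hf : HomAcyclic (cokernel f) K) :
    HomAcyclic A K := by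
  intro i g hg
  suffices ∃ b : B ⟶ K.X i, f ≫ b = g ∧ b ≫ K.d i (c.next i) = 0 by
    obtain ⟨b, hfb, hb⟩ := this
    obtain ⟨h, hh⟩ := hB i b hb
    exact ⟨f ≫ h, by rw [Category.assoc, hh, hfb]⟩
  have hfactor : f ≫ Injective.factorThru g f = g := Injective.comp_factorThru g f
  by_cases hi : c.Rel i (c.next i)
  · have hfd : f ≫ Injective.factorThru g f ≫ K.d i (c.next i) = 0 := by
      rw [reassoc_of% hfactor, hg]
    obtain ⟨k, hk⟩ := hf.exists_lift hi (cokernel.desc f _ hfd) (by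
      rw [← cancel_epi (cokernel.π f), cokernel.π_desc_assoc, Category.assoc, K.d_comp_d,
        comp_zero, comp_zero])
    refine ⟨Injective.factorThru g f - cokernel.π f ≫ k, ?_, ?_⟩
    · rw [Preadditive.comp_sub, hfactor, cokernel.condition_assoc, zero_comp, sub_zero]
    · rw [Preadditive.sub_comp, Category.assoc, hk, cokernel.π_desc, sub_self]
  · exact ⟨_, hfactor, by rw [K.shape _ _ hi, comp_zero]⟩

section Lifting

universe v

variable {R M Z : Type*} {A : Type v} [AddCommGroup M] [AddCommGroup A] [AddCommGroup Z]

lemma exists_maximal_linearPMap_lift [Ring R] [Module R M] [Module R A] [Module R Z]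
    (d : A →ₗ[R] Z) (g : M →ₗ[R] Z) :
    ∃ f : M →ₗ.[R] A, Maximal (fun f => ∀ x : f.domain, d (f x) = g x) f := by
  refine (zorn_le_nonempty₀ {f : M →ₗ.[R] A | ∀ x : f.domain, d (f x) = g x}
    (fun c hc hchain y hy => ?_) ⊥ ?_).imp fun f hf => hf.2
  · have hdir : DirectedOn (· ≤ ·) c := hchain.directedOn
    refine ⟨LinearPMap.sSup c hdir, ?_, fun f hf => LinearPMap.le_sSup hdir hf⟩
    rintro ⟨x, hx⟩
    obtain ⟨f, hf, hxf⟩ := (LinearPMap.mem_domain_sSup_iff ⟨y, hy⟩ hdir).1 hx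
    rw [LinearPMap.sSup_apply hdir hf ⟨x, hxf⟩]
    exact hc hf ⟨x, hxf⟩
  · rintro ⟨x, rfl⟩
    exact (map_zero d).trans (map_zero g).symm

lemma exists_maximal_lift [Ring R] [Small.{v} R] [Module R M] [Module R A] [Module R Z]
    [Module.Injective R A] (d : A →ₗ[R] Z) (g : M →ₗ[R] Z) :
    ∃ (N : Submodule R M) (h : M →ₗ[R] A), (∀ x ∈ N, d (h x) = g x) ∧
      ∀ h' : M →ₗ[R] A, (∀ x ∈ N, h' x = h x) → ∀ x, d (h' x) = g x → x ∈ N := by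
  obtain ⟨f, hf, hmax⟩ := exists_maximal_linearPMap_lift d g
  obtain ⟨h, hh⟩ := Module.Injective.extension_property R _ _ _ f.domain.subtype
    f.domain.subtype_injective f.toFun
  have hhf (x : f.domain) : h x = f x := LinearMap.congr_fun hh x
  refine ⟨f.domain, h, fun x hx => by rw [hhf ⟨x, hx⟩, hf ⟨x, hx⟩], fun h' hh' x hx => ?_⟩
  have hdom (y : f.domain) : d (h' y) = g y := by rw [hh' y y.2, hhf, hf]
  let f' : M →ₗ.[R] A := h'.toPMap (LinearMap.eqLocus (d ∘ₗ h') g)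
  have hf' (y : f'.domain) : d (f' y) = g y := y.2
  have hle : f ≤ f' :=
    ⟨fun y hy => hdom ⟨y, hy⟩, fun y z hyz => by rw [← hhf, ← hh' y y.2, hyz]; rfl⟩
  exact (hmax hf' hle).1 hx

/-- Baer's argument: a maximal partial lift, if not total, extends to the preimage of a
copy of `R ⧸ q` in the quotient by its domain. -/
lemma exists_lift_of_forall_prime_quotient [CommRing R] [IsNoetherianRing R] [Small.{v} R]
    [Module R M] [Module R A] [Module R Z] [Module.Injective R A] (d : A →ₗ[R] Z)
    (hd : ∀ q ∈ Module.support R M, ∀ g : (R ⧸ q.asIdeal) →ₗ[R] Z, ∃ h, d ∘ₗ h = g)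
    (g : M →ₗ[R] Z) : ∃ h, d ∘ₗ h = g := by
  obtain ⟨N, h, hN, hmax⟩ := exists_maximal_lift d g
  suffices N = ⊤ from ⟨h, LinearMap.ext fun x => hN x (this ▸ Submodule.mem_top)⟩
  by_contra hne
  have : Nontrivial (M ⧸ N) := Submodule.Quotient.nontrivial_iff.2 hne
  obtain ⟨q, hq⟩ := associatedPrimes.nonempty R (M ⧸ N)
  obtain ⟨hqp, φ, hφ⟩ := (isAssociatedPrime_iff_exists_injective_linearMap q _).1 hq
  have hqM : ⟨q, hqp⟩ ∈ Module.support R M := by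
    refine Module.support_subset_of_surjective N.mkQ N.mkQ_surjective
      (Module.support_subset_of_injective φ hφ ?_)
    simp [Module.support_of_algebra, PrimeSpectrum.mem_zeroLocus]
  obtain ⟨ψ, hψ⟩ : ∃ ψ : M ⧸ N →ₗ[R] Z, ∀ x, ψ (N.mkQ x) = g x - d (h x) :=
    ⟨N.liftQ (g - d ∘ₗ h) fun x hx => sub_eq_zero.2 (hN x hx).symm, fun _ => rfl⟩
  obtain ⟨k, hk⟩ := hd ⟨q, hqp⟩ hqM (ψ ∘ₗ φ)
  obtain ⟨k', rfl⟩ := Module.Injective.extension_property R _ _ _ φ hφ k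
  obtain ⟨x, hx⟩ := N.mkQ_surjective (φ 1)
  have hxN : x ∈ N := by
    refine hmax (h + k' ∘ₗ N.mkQ) (fun y hy => ?_) x ?_
    · simp [(Submodule.Quotient.mk_eq_zero N).2 hy]
    · have hdk : d (k' (N.mkQ x)) = g x - d (h x) := by
        rw [← hψ, hx]
        exact LinearMap.congr_fun hk 1
      rw [LinearMap.add_apply, map_add, LinearMap.comp_apply, hdk, add_sub_cancel]
  have : φ 1 = 0 := by rw [← hx]; exact (Submodule.Quotient.mk_eq_zero N).2 hxN
  exact one_ne_zero (hφ (this.trans (map_zero φ).symm))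

end Lifting

section Support

variable {R : Type u} [CommRing R] {ι : Type*} {c : ComplexShape ι}
  {K : HomologicalComplex (ModuleCat.{u} R) c}

lemma HomAcyclic.of_forall_prime_quotient [IsNoetherianRing R] (hK : ∀ i, Injective (K.X i))
    {M : ModuleCat.{u} R}
    (hM : ∀ q ∈ Module.support R M, HomAcyclic (ModuleCat.of R (R ⧸ q.asIdeal)) K) :
    HomAcyclic M K := by
  intro i g hg
  let Z := LinearMap.ker (K.d i (c.next i)).hom
  let d : K.X (c.prev i) →ₗ[R] Z := (K.d (c.prev i) i).hom.codRestrict Z fun x =>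
    ConcreteCategory.congr_hom (K.d_comp_d _ i _) x
  have hinj : Module.Injective R (K.X (c.prev i)) :=
    Module.injective_module_of_injective_object R _ (inj := hK _)
  have hd (q) (hq : q ∈ Module.support R M) (g : (R ⧸ q.asIdeal) →ₗ[R] Z) : ∃ h, d ∘ₗ h = g := by
    obtain ⟨h, hh⟩ := hM q hq i (ModuleCat.ofHom (Z.subtype ∘ₗ g))
      (ModuleCat.hom_ext (LinearMap.ext fun x => (g x).2))
    exact ⟨h.hom, LinearMap.ext fun x => Subtype.ext
      (ConcreteCategory.congr_hom hh x :)⟩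
  obtain ⟨h, hh⟩ := exists_lift_of_forall_prime_quotient d hd
    (g.hom.codRestrict Z fun x => ConcreteCategory.congr_hom hg x)
  exact ⟨ModuleCat.ofHom h, ModuleCat.hom_ext (LinearMap.ext fun x =>
    congrArg Subtype.val (LinearMap.congr_fun hh x))⟩

lemma lt_of_mem_support_of_residueField_surjective (p : Ideal R) [p.IsPrime] {Q : Type*}
    [AddCommGroup Q] [Module R Q] (π : p.ResidueField →ₗ[R] Q) (hπ : Function.Surjective π)
    (hone : π 1 = 0) {q : PrimeSpectrum R} (hq : q ∈ Module.support R Q) : p < q.asIdeal := by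
  refine lt_of_le_not_ge (le_trans (fun r hr => ?_) (Module.annihilator_le_of_mem_support hq))
    fun hqp => ?_
  · refine Module.mem_annihilator.2 fun m => ?_
    obtain ⟨y, rfl⟩ := hπ m
    rw [← map_smul, Algebra.smul_def, Ideal.algebraMap_residueField_eq_zero.2 hr, zero_mul,
      map_zero]
  · obtain ⟨m, hm⟩ := Module.mem_support_iff'.1 hq
    obtain ⟨y, rfl⟩ := hπ m
    obtain ⟨s, a, ha⟩ : ∃ s : R, ∃ a : R, s ∉ p ∧ s • y = a • 1 := by
      obtain ⟨a, s, hs, rfl⟩ := IsFractionRing.div_surjective (A := R ⧸ p) y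
      obtain ⟨a, rfl⟩ := Ideal.Quotient.mk_surjective a
      obtain ⟨s, rfl⟩ := Ideal.Quotient.mk_surjective s
      have hs0 := nonZeroDivisors.ne_zero hs
      refine ⟨s, a, fun h => hs0 (Ideal.Quotient.eq_zero_iff_mem.2 h), ?_⟩
      have hs1 : algebraMap R p.ResidueField s ≠ 0 := fun h =>
        hs0 (Ideal.Quotient.eq_zero_iff_mem.2 (Ideal.algebraMap_residueField_eq_zero.1 h))
      rw [Algebra.smul_def, Algebra.smul_def, mul_one]
      exact mul_div_cancel₀ _ hs1
    exact hm s (fun h => ha.1 (hqp h)) (by rw [← map_smul, ha.2, map_smul, hone, smul_zero])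

lemma HomAcyclic.prime_quotient_of_residueField [IsNoetherianRing R]
    (hK : ∀ i, Injective (K.X i))
    (hκ : ∀ p : PrimeSpectrum R, HomAcyclic (ModuleCat.of R p.asIdeal.ResidueField) K)
    (p : PrimeSpectrum R) : HomAcyclic (ModuleCat.of R (R ⧸ p.asIdeal)) K := by
  induction h : p.asIdeal using WellFoundedGT.induction generalizing p with
  | ind _ ih =>
    subst h
    let f : ModuleCat.of R (R ⧸ p.asIdeal) ⟶ ModuleCat.of R p.asIdeal.ResidueField :=
      ModuleCat.ofHom (IsScalarTower.toAlgHom R (R ⧸ p.asIdeal) _).toLinearMap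
    have : Mono f := (ModuleCat.mono_iff_injective f).2
      p.asIdeal.injective_algebraMap_quotient_residueField
    refine .of_mono_of_cokernel hK f (hκ p) (.of_forall_prime_quotient hK fun q hq =>
      ih q.asIdeal ?_ q rfl)
    refine lt_of_mem_support_of_residueField_surjective p.asIdeal (cokernel.π f).hom
      ((ModuleCat.epi_iff_surjective _).1 inferInstance) ?_ hq
    exact (congrArg (cokernel.π f) (map_one (algebraMap (R ⧸ p.asIdeal) _))).symm.trans
      (ConcreteCategory.congr_hom (cokernel.condition f) 1)

end Support

section Evaluation

variable {R : Type u} [CommRing R] {ι : Type*} {c : ComplexShape ι}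

/-- The complex `Hom_R(A, K)` over an arbitrary complex shape; for `ℤ`-indexed chain complexes
this is `homComplex`. -/
noncomputable abbrev linearHomComplex (A : ModuleCat.{u} R)
    (K : HomologicalComplex (ModuleCat.{u} R) c) : HomologicalComplex (ModuleCat.{u} R) c :=
  (((linearCoyoneda R (ModuleCat.{u} R)).obj (.op A)).mapHomologicalComplex c).obj K

/-- Evaluation at `1`, as a chain map `Hom_R(S, K) ⟶ K`. -/
noncomputable def evalOne (S : Type u) [Ring S] [Algebra R S]
    (K : HomologicalComplex (ModuleCat.{u} R) c) : linearHomComplex (.of R S) K ⟶ K where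
  f i := ModuleCat.ofHom (LinearMap.applyₗ 1 ∘ₗ (ModuleCat.homLinearEquiv (S := R)).toLinearMap)

variable {K : HomologicalComplex (ModuleCat.{u} R) c}

lemma exactAt_iff_forall_exists (i : ι) :
    K.ExactAt i ↔ ∀ x : K.X i, K.d i (c.next i) x = 0 →
      ∃ y : K.X (c.prev i), K.d (c.prev i) i y = x :=
  ShortComplex.moduleCat_exact_iff _

lemma isAcyclic_linearHomComplex_iff {A : ModuleCat.{u} R} :
    isAcyclic (linearHomComplex A K) ↔ HomAcyclic A K :=
  forall_congr' exactAt_iff_forall_exists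

lemma isAcyclic_of_homAcyclic_self (hR : HomAcyclic (ModuleCat.of R R) K) : isAcyclic K := by
  refine fun i => (exactAt_iff_forall_exists i).2 fun x hx => ?_
  obtain ⟨h, hh⟩ := hR i (ModuleCat.ofHom (LinearMap.toSpanSingleton R _ x))
    (ModuleCat.hom_ext (LinearMap.ext_ring (by simpa using hx)))
  exact ⟨h (1 : R), (ConcreteCategory.congr_hom hh (1 : R)).trans (one_smul R x)⟩

lemma HomAcyclic.of_isScalarTower {S : Type u} [Ring S] [Algebra R S]
    (hK : ∀ M : HomologicalComplex (ModuleCat.{u} R) c, isAcyclic M →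
      ∀ f : M ⟶ K, Nonempty (Homotopy f 0))
    (hS : HomAcyclic (ModuleCat.of R S) K) (A : Type u) [AddCommGroup A] [Module R A] [Module S A]
    [IsScalarTower R S A] : HomAcyclic (ModuleCat.of R A) K := by
  obtain ⟨η⟩ := hK _ (isAcyclic_linearHomComplex_iff.2 hS) (evalOne S K)
  intro i g hg
  let adj : ModuleCat.of R A ⟶ (linearHomComplex (.of R S) K).X i :=
    ModuleCat.ofHom ((ModuleCat.homLinearEquiv (S := R)).symm.toLinearMap ∘ₗ
      LinearMap.compRight R g.hom ∘ₗ (Algebra.lsmul R R A).toLinearMap.flip)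
  have adj_eval : adj ≫ (evalOne S K).f i = g :=
    ModuleCat.hom_ext (LinearMap.ext fun a => congrArg g.hom (one_smul S a))
  have adj_d : adj ≫ (linearHomComplex (.of R S) K).d i (c.next i) = 0 :=
    ModuleCat.hom_ext (LinearMap.ext fun a => ModuleCat.hom_ext (LinearMap.ext fun s =>
      ConcreteCategory.congr_hom hg (s • a)))
  refine ⟨adj ≫ η.hom i (c.prev i), ?_⟩
  calc (adj ≫ η.hom i (c.prev i)) ≫ K.d (c.prev i) i
      = adj ≫ (linearHomComplex (.of R S) K).d i (c.next i) ≫ η.hom (c.next i) i +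
          adj ≫ η.hom i (c.prev i) ≫ K.d (c.prev i) i := by
        rw [reassoc_of% adj_d, zero_comp, zero_add, Category.assoc]
    _ = adj ≫ (evalOne S K).f i := by
        rw [η.comm i, HomologicalComplex.zero_f, add_zero, Preadditive.comp_add]
        rfl
    _ = g := adj_eval

lemma HomAcyclic.of_algHom {k L : Type u} [Field k] [Algebra R k] [CommRing L] [Nontrivial L]
    [Algebra R L] (φ : k →ₐ[R] L) (hL : HomAcyclic (ModuleCat.of R L) K) :
    HomAcyclic (ModuleCat.of R k) K := by
  let _ : Algebra k L := φ.toRingHom.toAlgebra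
  have : IsScalarTower R k L := .of_algebraMap_eq fun r => (φ.commutes r).symm
  obtain ⟨r, hr⟩ := (Algebra.linearMap k L).exists_leftInverse_of_injective
    (LinearMap.ker_eq_bot.2 (algebraMap k L).injective)
  exact hL.of_retract
    { i := ModuleCat.ofHom φ.toLinearMap
      r := ModuleCat.ofHom (r.restrictScalars R)
      retract := ModuleCat.hom_ext (LinearMap.ext fun x => LinearMap.congr_fun hr x) }

theorem isAcyclic_of_homAcyclic_algebra [IsNoetherianRing R] {S : Type u} [CommRing S] [Algebra R S]
    (hRS : Function.Surjective (PrimeSpectrum.comap (algebraMap R S)))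
    (hinj : ∀ i, Injective (K.X i))
    (hK : ∀ M : HomologicalComplex (ModuleCat.{u} R) c, isAcyclic M →
      ∀ f : M ⟶ K, Nonempty (Homotopy f 0))
    (hS : HomAcyclic (ModuleCat.of R S) K) : isAcyclic K := by
  have hκ (p : PrimeSpectrum R) : HomAcyclic (ModuleCat.of R p.asIdeal.ResidueField) K := by
    obtain ⟨q, rfl⟩ := hRS p
    exact .of_algHom
      (Ideal.ResidueField.mapₐ (q.comap (algebraMap R S)).asIdeal q.asIdeal (Algebra.ofId R S) rfl)
      (hS.of_isScalarTower hK q.asIdeal.ResidueField)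
  exact isAcyclic_of_homAcyclic_self (.of_forall_prime_quotient hinj fun p _ =>
    .prime_quotient_of_residueField hinj hκ p)

end Evaluation

section ExtVanishing

lemma subsingleton_ext_of_extmod {R : Type u} [CommRing R] {M N : Type u} [AddCommGroup M]
    [Module R M] [AddCommGroup N] [Module R N] {n : ℕ}
    (hMN : Subsingleton (extmod R M N (n + 1))) :
    Subsingleton (Abelian.Ext (ModuleCat.of R M) (ModuleCat.of R N) (n + 1)) := by
  let P := ProjectiveResolution.of (ModuleCat.of R M)
  have hexact := (ModuleCat.isZero_of_subsingleton (extmod R M N (n + 1))).of_iso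
    (P.isoExt (R := R) (n + 1) (ModuleCat.of R N)).symm
  rw [← HomologicalComplex.exactAt_iff_isZero_homology,
    HomologicalComplex.exactAt_iff' _ n (n + 1) (n + 2) (by simp) (by simp),
    ShortComplex.moduleCat_exact_iff] at hexact
  refine subsingleton_of_forall_eq 0 fun α => ?_
  obtain ⟨f, hf, rfl⟩ := P.extMk_surjective α (n + 2) rfl
  exact (P.extMk_eq_zero_iff f (n + 2) rfl hf n rfl).2 (hexact f hf)

lemma homAcyclic_injectiveResolution {C : Type*} [Category* C] [Abelian C] [HasExt C] {A N : C}
    (J : InjectiveResolution N) (hHom : ∀ g : A ⟶ N, g = 0)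
    (hExt : ∀ n, Subsingleton (Abelian.Ext A N (n + 1))) : HomAcyclic A J.cochainComplex := by
  intro i g hg
  obtain hi | hi := lt_or_ge i 0
  · exact ⟨0, (CochainComplex.isZero_of_isStrictlyGE J.cochainComplex 0 i hi).eq_of_tgt _ _⟩
  lift i to ℕ using hi
  have hcycle : (g ≫ (J.cochainComplexXIso i i rfl).hom) ≫ J.cocomplex.d i (i + 1) = 0 := by
    rw [J.cochainComplex_d i _ i (i + 1) rfl (by simp)] at hg
    rw [← cancel_mono (J.cochainComplexXIso ((ComplexShape.up ℤ).next i) (i + 1) (by simp)).inv]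
    simpa using hg
  cases i with
  | zero =>
    have hzero : g ≫ (J.cochainComplexXIso (0 : ℕ) 0 rfl).hom = 0 := by
      rw [← J.exact₀.lift_f _ hcycle, hHom (J.exact₀.lift _ hcycle)]
      exact zero_comp
    obtain rfl : g = 0 := by
      rw [← cancel_mono (J.cochainComplexXIso (0 : ℕ) 0 rfl).hom, hzero, zero_comp]
    exact ⟨0, zero_comp⟩
  | succ n =>
    obtain ⟨h, hh⟩ := (J.extMk_eq_zero_iff _ (n + 2) rfl hcycle n rfl).1 (Subsingleton.elim _ _)
    refine ⟨h ≫ (J.cochainComplexXIso _ n (by simp)).inv, ?_⟩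
    rw [J.cochainComplex_d _ _ n (n + 1) (by simp) rfl, Category.assoc, Iso.inv_hom_id_assoc,
      reassoc_of% hh, Iso.hom_inv_id, Category.comp_id]

end ExtVanishing

theorem acyclic_of_rhomS_acyclic_general
    (R : Type u) [CommRing R] [IsNoetherianRing R]
    (S : Type u) [CommRing S] [Algebra R S]
    (hRS : Function.Surjective (PrimeSpectrum.comap (algebraMap R S))) :
    (∀ (X I : ChainComplex (ModuleCat.{u} R) ℤ) (f : X ⟶ I),
        SemiInjective R I → QuasiIso f →
        isAcyclic (homComplex (ModuleCat.of R S) I) → isAcyclic X) ∧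
    (∀ (N : Type u) [AddCommGroup N] [Module R N],
        Subsingleton (S →ₗ[R] N) → (∀ n : ℕ, 0 < n → Subsingleton (extmod R S N n)) →
        Subsingleton N) := by
  constructor
  · intro X I f hI _ hSI i
    have hIac := isAcyclic_of_homAcyclic_algebra hRS hI.1 hI.2
      (isAcyclic_linearHomComplex_iff.1 hSI)
    exact (quasiIsoAt_iff_exactAt' f i (hIac i)).1 inferInstance
  · intro N _ _ hHom hExt
    let J := InjectiveResolution.of (ModuleCat.of R N)
    have hSJ : HomAcyclic (ModuleCat.of R S) J.cochainComplex :=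
      homAcyclic_injectiveResolution J
        (fun g => ModuleCat.hom_ext (Subsingleton.elim (α := S →ₗ[R] N) _ _))
        fun n => subsingleton_ext_of_extmod (hExt (n + 1) n.succ_pos)
    have hJac : isAcyclic J.cochainComplex := isAcyclic_of_homAcyclic_algebra hRS inferInstance
      (fun M hM f => CochainComplex.IsKInjective.nonempty_homotopy_zero f hM) hSJ
    have hN := (quasiIsoAt_iff_exactAt' J.ι' 0 (hJac 0)).1 inferInstance
    exact ModuleCat.subsingleton_of_isZero (hN.isZero_homology.of_iso
      (HomologicalComplex.singleObjHomologySelfIso (.up ℤ) 0 (ModuleCat.of R N)).symm)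

/-- Let `R` be a commutative noetherian ring and `S` a faithfully flat (commutative)
`R`-algebra.  If `X` is an `R`-complex such that `RHom_R(S,X)` is acyclic — presented
here by `Hom_R(S,I)` for a semi-injective resolution `I` of `X` — then `X` is acyclic.
In particular, an `R`-module `N` with `Hom_R(S,N) = 0` and `Ext_R^n(S,N) = 0` for all
`n > 0` is the zero module. -/
theorem acyclic_of_rhomS_acyclic
    (R : Type u) [CommRing R] [IsNoetherianRing R]
    (S : Type u) [CommRing S] [Algebra R S] [Module.FaithfullyFlat R S] :
    (∀ (X I : ChainComplex (ModuleCat.{u} R) ℤ) (f : X ⟶ I),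
        SemiInjective R I → QuasiIso f →
        isAcyclic (homComplex (ModuleCat.of R S) I) → isAcyclic X) ∧
    (∀ (N : Type u) [AddCommGroup N] [Module R N],
        Subsingleton (S →ₗ[R] N) → (∀ n : ℕ, 0 < n → Subsingleton (extmod R S N n)) →
        Subsingleton N) :=
  acyclic_of_rhomS_acyclic_general R S PrimeSpectrum.comap_surjective_of_faithfullyFlat
end
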